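/- arXiv:2004.05929 — 4 statements merged into one kernel-verified Lean document; each statement's English description precedes it below -/
import Mathlib

section
/- Let γ be a tamely Liouville irrational number, with σ_γ(Q) ≤ C_γ (log Q)^{1/4 − ε₀} for all Q ≥ 2, for some ε₀ > 0 and C_γ > 0. Let 0 < ε₁ < 2ε₀ and C > 0, and let ψ be an approximation function satisfying ψ(q) ≤ C/q for all q ≥ 1, ψ(1) = ψ(2) = 0, and ψ(q) = 0 whenever Ω(q) > (log q)^{1/2 + ε₁}. Then there exist constants C′, C″ > 0 such that for all integers q ≥ 16: ∑_{1 ≤ q′ < q} (ψ(q)/q)·gcd(q′,q)·𝟙[‖γ(q − q′)/gcd(q,q′)‖ ≤ Δ(q,q′)/gcd(q,q′)] ≤ C′·ψ(q)·∑_{r | q} (log r)/r + C″·ψ(q). -/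
open MeasureTheory Filter Real

/-- Distance from a real number to the nearest integer. -/
noncomputable def dnint (x : ℝ) : ℝ := |x - round x|

/-- `Δ(q,q') = qψ(q') + q'ψ(q)`. -/
noncomputable def Δfun (ψ : ℕ → ℝ) (q q' : ℕ) : ℝ := q * ψ q' + q' * ψ q

/-- `σ_γ(Q)`: the infimum of all `σ > 0` with `‖qγ‖ ≥ q^{-σ}` for all `2 ≤ q ≤ Q`. -/
noncomputable def sigmaExp (γ : ℝ) (Q : ℕ) : ℝ :=
  sInf {σ : ℝ | 0 < σ ∧ ∀ q : ℕ, 2 ≤ q → q ≤ Q → (q : ℝ) ^ (-σ) ≤ dnint (q * γ)}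

/-! Write `d = gcd(q, q')`, `q = d r` and `q' = d s`. Since `Δ(q, q') ≤ 2 C q / q'`, the sum at `q`
is at most `ψ(q) ∑_{d ∣ q} |G_d| / r`, where `G_d` is the set of `s < r` with
`‖γ(r - s)‖ ≤ 2 C r / (d s)`.

If `t` is a rational with `|γ - t| ≤ 1 / den(t)²`, the first `den(t) / 2` multiples of `γ` stay
`1 / (2 den(t))` away from the integers. Hence an interval of length `N ≥ den(t)` contains
`O(N (δ + 1 / den(t)))` points `s` with `‖β - s γ‖ ≤ δ`, and summing over the dyadic blocks of
`[1, r)` gives `|G_d| / r ≪ 2^{-L} + L / d` as soon as `den(t) ≥ 2^L` and `r ≥ 2^L den(t)`. Tameness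
provides such a `t` with `log den(t) ≪ L^a`, where `a = 5/4 - ε₀`.

Let `q` be large with `Ω(q) ≤ L := (log q)^{1/2 + ε₁}`. For `log d ≤ 2L` the estimate at the scale
`log d` gives `|G_d| / r ≪ (log d) / d`. For `log d > 2L` the estimate at the scale `L` gives
`|G_d| / r ≪ 2^{-L}`, unless `log r ≪ L^a`; then tameness at the scale `log r` makes `G_d` empty,
because `L^{a²} = o(log q)`. The number of divisors is at most `2^{Ω(q)} ≤ 2^L`, so the second kind
of divisors contributes `O(1)` in total. -/

theorem dnint_le (x : ℝ) (k : ℤ) : dnint x ≤ |x - k| := round_le x k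

theorem dnint_sub_le (x y : ℝ) : dnint (x - y) ≤ |(x - round x) - (y - round y)| := by
  convert! dnint_le (x - y) (round x - round y) using 2
  push_cast
  ring

theorem dnint_natCast_mul_pos {γ : ℝ} (hγ : Irrational γ) {n : ℕ} (hn : n ≠ 0) :
    0 < dnint (n * γ) :=
  abs_pos.2 (sub_ne_zero.2 ((hγ.natCast_mul hn).ne_int _))

theorem one_div_den_le_abs_natCast_mul_sub {t : ℚ} {j : ℕ} (hj : 0 < j) (hjt : j < t.den)
    (k : ℤ) : 1 / (t.den : ℝ) ≤ |(j : ℝ) * t - k| := by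
  have hne : j * t.num - k * t.den ≠ 0 := by
    intro h
    have hdvd : (t.den : ℤ) ∣ j * t.num := ⟨k, by linarith⟩
    have hcop : IsCoprime (t.den : ℤ) t.num :=
      Int.isCoprime_iff_gcd_eq_one.2 (by simpa [Int.gcd, Nat.Coprime] using t.reduced.symm)
    exact absurd (Int.le_of_dvd (by omega) (hcop.dvd_of_dvd_mul_right hdvd)) (by omega)
  have hnum : (j : ℝ) * t - k = (j * t.num - k * t.den : ℤ) / (t.den : ℝ) := by
    rw [Rat.cast_def]
    push_cast
    field_simp
  rw [hnum, abs_div, Nat.abs_cast]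
  gcongr
  exact_mod_cast Int.one_le_abs hne

theorem one_div_two_mul_den_le_dnint {γ : ℝ} {t : ℚ} (ht : |γ - t| ≤ 1 / (t.den : ℝ) ^ 2)
    {j : ℕ} (hj : 0 < j) (hjt : 2 * j ≤ t.den) : 1 / (2 * (t.den : ℝ)) ≤ dnint (j * γ) := by
  have hjt' : (j : ℝ) ≤ t.den / 2 := by
    rw [le_div_iff₀ two_pos, mul_comm]
    exact_mod_cast hjt
  have hmul : |(j : ℝ) * (γ - t)| ≤ 1 / (2 * t.den) :=
    calc |(j : ℝ) * (γ - t)| = j * |γ - t| := by rw [abs_mul, Nat.abs_cast]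
      _ ≤ t.den / 2 * (1 / (t.den : ℝ) ^ 2) := by gcongr
      _ = 1 / (2 * t.den) := by field_simp
  calc 1 / (2 * (t.den : ℝ)) = 1 / t.den - 1 / (2 * t.den) := by field_simp; ring
    _ ≤ |(j : ℝ) * t - round (j * γ)| - |(j : ℝ) * (γ - t)| :=
        sub_le_sub (one_div_den_le_abs_natCast_mul_sub hj (by omega) _) hmul
    _ ≤ |((j : ℝ) * t - round (j * γ)) - -((j : ℝ) * (γ - t))| := by
        rw [← abs_neg ((j : ℝ) * (γ - t))]
        exact abs_sub_abs_le_abs_sub _ _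
    _ = dnint (j * γ) := by
        rw [dnint]
        congr 1
        ring

theorem card_le_of_abs_le_of_separated {ι : Type*} {A : Finset ι} {f : ι → ℝ} {δ η : ℝ}
    (hδ : 0 ≤ δ) (hη : 0 < η) (hf : ∀ s ∈ A, |f s| ≤ δ)
    (hsep : ∀ s ∈ A, ∀ t ∈ A, s ≠ t → η ≤ |f s - f t|) : (A.card : ℝ) ≤ 2 * δ / η + 1 := by
  have hnonneg : ∀ s ∈ A, 0 ≤ (f s + δ) / η := fun s hs ↦
    div_nonneg (by linarith [(abs_le.1 (hf s hs)).1]) hη.le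
  have hcard : A.card ≤ (Finset.range (⌊2 * δ / η⌋₊ + 1)).card := by
    refine Finset.card_le_card_of_injOn (fun s ↦ ⌊(f s + δ) / η⌋₊) (fun s hs ↦ ?_) ?_
    · have := (abs_le.1 (hf s hs)).2
      simp only [Finset.coe_range, Set.mem_Iio, Nat.lt_add_one_iff]
      gcongr
      linarith
    · intro s hs t ht hst
      by_contra hne
      have hlt := Int.abs_sub_lt_one_of_floor_eq_floor
        ((Int.natCast_floor_eq_floor (hnonneg s hs)).symm.trans
          ((congrArg _ hst).trans (Int.natCast_floor_eq_floor (hnonneg t ht))))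
      rw [← sub_div, abs_div, abs_of_pos hη, div_lt_one hη, add_sub_add_right_eq_sub] at hlt
      exact (hsep s hs t ht hne).not_gt hlt
  rw [Finset.card_range] at hcard
  calc (A.card : ℝ) ≤ (⌊2 * δ / η⌋₊ : ℝ) + 1 := by exact_mod_cast hcard
    _ ≤ 2 * δ / η + 1 := by gcongr; exact Nat.floor_le (by positivity)

section GoodApproximation

variable {γ δ : ℝ} {t : ℚ}

theorem card_le_of_dnint_le_of_short (ht : |γ - t| ≤ 1 / (t.den : ℝ) ^ 2) {β : ℝ}
    (hδ : 0 ≤ δ) {A : Finset ℕ} (hshort : ∀ s ∈ A, ∀ s' ∈ A, 2 * (s' - s) ≤ t.den)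
    (hA : ∀ s ∈ A, dnint (β - s * γ) ≤ δ) : (A.card : ℝ) ≤ 4 * δ * t.den + 1 := by
  let f : ℕ → ℝ := fun s ↦ (β - s * γ) - round (β - s * γ)
  have hlt : ∀ s ∈ A, ∀ s' ∈ A, s < s' → 1 / (2 * (t.den : ℝ)) ≤ |f s - f s'| := by
    intro s hs s' hs' hss'
    calc 1 / (2 * (t.den : ℝ)) ≤ dnint ((s' - s : ℕ) * γ) :=
          one_div_two_mul_den_le_dnint ht (by omega) (hshort s hs s' hs')
      _ = dnint ((β - s * γ) - (β - s' * γ)) := by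
          rw [Nat.cast_sub hss'.le]
          congr 1
          ring
      _ ≤ |f s - f s'| := dnint_sub_le _ _
  have hcard := card_le_of_abs_le_of_separated (f := f) hδ (by positivity) hA fun s hs s' hs' hne ↦
    hne.lt_or_gt.elim (hlt s hs s' hs') fun h ↦ abs_sub_comm (f s) (f s') ▸ hlt s' hs' s hs h
  calc (A.card : ℝ) ≤ 2 * δ / (1 / (2 * t.den)) + 1 := hcard
    _ = 4 * δ * t.den + 1 := by field_simp; ring

theorem card_le_of_dnint_le (ht : |γ - t| ≤ 1 / (t.den : ℝ) ^ 2) {β : ℝ} (hδ : 0 ≤ δ)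
    {x N : ℕ} (hN : t.den ≤ N) {A : Finset ℕ}
    (hA : ∀ s ∈ A, s ∈ Finset.Ico x (x + N) ∧ dnint (β - s * γ) ≤ δ) :
    (A.card : ℝ) ≤ 3 * N * (4 * δ + 1 / t.den) := by
  have hden : (0 : ℝ) < t.den := by exact_mod_cast t.den_pos
  set J := t.den / 2 + 1
  have hmaps : Set.MapsTo (fun s ↦ (s - x) / J) A (Finset.range (N / J + 1) : Set ℕ) := by
    intro s hs
    have := Finset.mem_Ico.1 (hA s hs).1
    simpa [Nat.lt_add_one_iff] using Nat.div_le_div_right (by omega)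
  have hfiber : ∀ k ∈ Finset.range (N / J + 1),
      (({s ∈ A | (s - x) / J = k}).card : ℝ) ≤ 4 * δ * t.den + 1 := by
    intro k _
    refine card_le_of_dnint_le_of_short ht hδ (fun s hs s' hs' ↦ ?_)
      fun s hs ↦ (hA s (Finset.mem_filter.1 hs).1).2
    obtain ⟨hsA, rfl⟩ := Finset.mem_filter.1 hs
    have hblock := (Finset.mem_filter.1 hs').2
    have hx := Finset.mem_Ico.1 (hA s hsA).1
    have hdiv := Nat.div_add_mod (s - x) J
    have hdiv' := Nat.div_add_mod (s' - x) J
    have hmod' := Nat.mod_lt (s' - x) (show 0 < J by omega)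
    rw [hblock] at hdiv'
    omega
  have hblocks : ((N / J : ℕ) : ℝ) + 1 ≤ 3 * N / t.den := by
    have hJden : (t.den : ℝ) / 2 ≤ J := by
      rw [div_le_iff₀ two_pos]
      exact_mod_cast (by omega : t.den ≤ J * 2)
    have hNden : 1 ≤ (N : ℝ) / t.den := (one_le_div hden).2 (by exact_mod_cast hN)
    calc ((N / J : ℕ) : ℝ) + 1 ≤ N / (t.den / 2) + N / t.den := by
          refine add_le_add (Nat.cast_div_le.trans ?_) hNden
          gcongr
      _ = 3 * N / t.den := by field_simp; ring
  calc (A.card : ℝ) = ∑ k ∈ Finset.range (N / J + 1), (({s ∈ A | (s - x) / J = k}).card : ℝ) := by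
        exact_mod_cast Finset.card_eq_sum_card_fiberwise hmaps
    _ ≤ ∑ _k ∈ Finset.range (N / J + 1), (4 * δ * t.den + 1) := Finset.sum_le_sum hfiber
    _ = ((N / J : ℕ) + 1) * (4 * δ * t.den + 1) := by
        rw [Finset.sum_const, Finset.card_range, nsmul_eq_mul, Nat.cast_succ]
    _ ≤ 3 * N / t.den * (4 * δ * t.den + 1) := by gcongr
    _ = 3 * N * (4 * δ + 1 / t.den) := by field_simp

end GoodApproximation

/-- The `s` with `1 ≤ s < r` for which `r - s` is an approximate return time of the rotation by
`γ`, with tolerance `δ r / s`. These are the pairs `q' = d s` counted by the overlap sum at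
`q = d r`, with `δ` of order `1 / d`. -/
noncomputable def returnSet (γ δ : ℝ) (r : ℕ) : Finset ℕ :=
  {s ∈ Finset.Ico 1 r | dnint (γ * ((r : ℝ) - s)) ≤ δ * r / s}

theorem mem_returnSet {γ δ : ℝ} {r s : ℕ} :
    s ∈ returnSet γ δ r ↔ (1 ≤ s ∧ s < r) ∧ dnint (γ * ((r : ℝ) - s)) ≤ δ * r / s := by
  rw [returnSet, Finset.mem_filter, Finset.mem_Ico]

theorem card_returnSet_le_self (γ δ : ℝ) (r : ℕ) : (returnSet γ δ r).card ≤ r :=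
  (Finset.card_filter_le _ _).trans (by simp)

section DyadicBlocks

variable {γ δ : ℝ} {t : ℚ}

theorem card_returnSet_filter_Ico_le (ht : |γ - t| ≤ 1 / (t.den : ℝ) ^ 2) (hδ : 0 ≤ δ)
    {r x : ℕ} (hx : t.den ≤ x) :
    (({s ∈ returnSet γ δ r | s ∈ Finset.Ico x (x + x)}).card : ℝ) ≤
      12 * δ * r + 3 * x / t.den := by
  have hx0 : (0 : ℝ) < x := by exact_mod_cast t.den_pos.trans_le hx
  have hcard := card_le_of_dnint_le ht (β := γ * r) (δ := δ * r / x) (by positivity) hx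
    (A := {s ∈ returnSet γ δ r | s ∈ Finset.Ico x (x + x)}) fun s hs ↦ by
      obtain ⟨hsr, hsx⟩ := Finset.mem_filter.1 hs
      have hxs : (x : ℝ) ≤ s := by exact_mod_cast (Finset.mem_Ico.1 hsx).1
      refine ⟨hsx, ?_⟩
      calc dnint (γ * r - s * γ) = dnint (γ * (r - s)) := by congr 1; ring
        _ ≤ δ * r / s := (mem_returnSet.1 hsr).2
        _ ≤ δ * r / x := by gcongr
  refine hcard.trans_eq ?_
  field_simp
  ring

theorem card_returnSet_filter_lt_le (ht : |γ - t| ≤ 1 / (t.den : ℝ) ^ 2) (hδ : 0 ≤ δ)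
    {r T : ℕ} (hT : t.den ≤ T) (J : ℕ) :
    (({s ∈ returnSet γ δ r | s < 2 ^ J * T}).card : ℝ) ≤
      T + J * (12 * δ * r) + 3 * (2 ^ J * T) / t.den := by
  induction J with
  | zero =>
    have hsub : {s ∈ returnSet γ δ r | s < 2 ^ 0 * T} ⊆ Finset.range T := fun s hs ↦ by
      simpa using (Finset.mem_filter.1 hs).2
    have hcard : (({s ∈ returnSet γ δ r | s < 2 ^ 0 * T}).card : ℝ) ≤ T := by
      exact_mod_cast (Finset.card_le_card hsub).trans_eq (Finset.card_range T)
    refine hcard.trans ?_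
    rw [Nat.cast_zero, zero_mul, add_zero]
    exact le_add_of_nonneg_right (by positivity)
  | succ J ih =>
    have hsub : {s ∈ returnSet γ δ r | s < 2 ^ (J + 1) * T} ⊆
        {s ∈ returnSet γ δ r | s < 2 ^ J * T} ∪
          {s ∈ returnSet γ δ r | s ∈ Finset.Ico (2 ^ J * T) (2 ^ J * T + 2 ^ J * T)} := by
      intro s hs
      have hpow : 2 ^ (J + 1) * T = 2 ^ J * T + 2 ^ J * T := by ring
      simp only [Finset.mem_union, Finset.mem_filter, Finset.mem_Ico] at hs ⊢
      exact (lt_or_ge s (2 ^ J * T)).imp (fun h ↦ ⟨hs.1, h⟩) fun h ↦ ⟨hs.1, h, hpow ▸ hs.2⟩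
    have hcard := (Finset.card_le_card hsub).trans (Finset.card_union_le _ _)
    have hblock := card_returnSet_filter_Ico_le (r := r) ht hδ
      (hT.trans (Nat.le_mul_of_pos_left T (Nat.two_pow_pos J)))
    refine (Nat.cast_le.2 hcard).trans ?_
    rw [Nat.cast_add]
    refine (add_le_add ih hblock).trans_eq ?_
    push_cast
    ring

theorem card_returnSet_le_of_den_mul_two_pow_le (ht : |γ - t| ≤ 1 / (t.den : ℝ) ^ 2)
    (hδ : 0 ≤ δ) {r K : ℕ} (hK : t.den * 2 ^ K ≤ r) :
    ((returnSet γ δ r).card : ℝ) ≤ r * (1 / 2 ^ K + 12 * (K + 1) * δ + 6 / t.den) := by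
  set T := r / 2 ^ K
  have hT : t.den ≤ T := (Nat.le_div_iff_mul_le (Nat.two_pow_pos K)).2 hK
  have hTr : 2 ^ K * (T : ℝ) ≤ r := by exact_mod_cast Nat.mul_div_le r (2 ^ K)
  have hlt : r < 2 ^ (K + 1) * T :=
    calc r < 2 ^ K * (T + 1) := Nat.lt_mul_div_succ r (Nat.two_pow_pos K)
      _ ≤ 2 ^ K * (T + T) := by gcongr; exact t.den_pos.trans_le hT
      _ = 2 ^ (K + 1) * T := by ring
  have hall : {s ∈ returnSet γ δ r | s < 2 ^ (K + 1) * T} = returnSet γ δ r :=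
    Finset.filter_true_of_mem fun s hs ↦ (mem_returnSet.1 hs).1.2.trans hlt
  calc ((returnSet γ δ r).card : ℝ)
      ≤ T + (K + 1 : ℕ) * (12 * δ * r) + 3 * (2 ^ (K + 1) * T) / t.den :=
        hall ▸ card_returnSet_filter_lt_le ht hδ hT (K + 1)
    _ = (2 ^ K * T) / 2 ^ K + r * (12 * (K + 1) * δ) + 6 * (2 ^ K * T) / t.den := by
        push_cast
        field_simp
        ring
    _ ≤ r / 2 ^ K + r * (12 * (K + 1) * δ) + 6 * r / t.den := by gcongr
    _ = r * (1 / 2 ^ K + 12 * (K + 1) * δ + 6 / t.den) := by ring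

end DyadicBlocks

theorem nonempty_setOf_rpow_neg_le_dnint {γ : ℝ} (hγ : Irrational γ) (Q : ℕ) :
    {σ : ℝ | 0 < σ ∧ ∀ q : ℕ, 2 ≤ q → q ≤ Q → (q : ℝ) ^ (-σ) ≤ dnint (q * γ)}.Nonempty := by
  have hlarge : ∀ᶠ σ : ℝ in atTop, ∀ q ∈ Finset.Icc 2 Q, (q : ℝ) ^ (-σ) ≤ dnint (q * γ) := by
    rw [Filter.eventually_all_finset]
    intro q hq
    have hq2 := (Finset.mem_Icc.1 hq).1
    have hlim := (tendsto_rpow_atBot_of_base_gt_one (q : ℝ) (by exact_mod_cast hq2)).comp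
      tendsto_neg_atTop_atBot
    exact (hlim.eventually_lt_const (dnint_natCast_mul_pos hγ (by omega))).mono fun σ hσ ↦ hσ.le
  obtain ⟨σ, hσ, hσ0⟩ := (hlarge.and (eventually_gt_atTop 0)).exists
  exact ⟨σ, hσ0, fun q h2 hQ ↦ hσ q (Finset.mem_Icc.2 ⟨h2, hQ⟩)⟩

theorem eventually_one_le_sigmaExp {γ : ℝ} (hγ : Irrational γ) :
    ∀ᶠ Q in atTop, 1 ≤ sigmaExp γ Q := by
  have hγ0 : 0 < dnint γ := by simpa using dnint_natCast_mul_pos hγ one_ne_zero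
  have hlim : ∀ᶠ Q : ℕ in atTop, 1 / ((Q : ℝ) + 1) < dnint γ :=
    tendsto_one_div_add_atTop_nhds_zero_nat.eventually_lt_const hγ0
  filter_upwards [hlim, eventually_ge_atTop 1] with Q hQγ hQ
  obtain ⟨n, hn0, hnQ, hn⟩ : ∃ n : ℕ, 0 < n ∧ n ≤ Q ∧ dnint (n * γ) ≤ 1 / (Q + 1) :=
    Real.exists_nat_abs_mul_sub_round_le γ hQ
  have hn1 : n ≠ 1 := by
    rintro rfl
    rw [Nat.cast_one, one_mul] at hn
    exact hn.not_gt hQγ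
  refine le_csInf (nonempty_setOf_rpow_neg_le_dnint hγ Q) fun σ hσ ↦ ?_
  by_contra! hσ1
  have hn1' : (1 : ℝ) ≤ n := by exact_mod_cast hn0
  refine absurd (hσ.2 n (by omega) hnQ) (not_le.2 (hn.trans_lt ?_))
  calc 1 / ((Q : ℝ) + 1) < 1 / n := by gcongr; exact_mod_cast Nat.lt_succ_of_le hnQ
    _ = (n : ℝ) ^ (-1 : ℝ) := by rw [Real.rpow_neg_one, one_div]
    _ ≤ (n : ℝ) ^ (-σ) := Real.rpow_le_rpow_of_exponent_le hn1' (by linarith)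

theorem tendsto_logb_two_natCast_atTop : Tendsto (fun q : ℕ ↦ Real.logb 2 q) atTop atTop :=
  (Real.tendsto_logb_atTop one_lt_two).comp tendsto_natCast_atTop_atTop

theorem one_le_logb_two {q : ℕ} (hq : 2 ≤ q) : 1 ≤ Real.logb 2 q := by
  rw [Real.le_logb_iff_rpow_le one_lt_two (by positivity), Real.rpow_one]
  exact_mod_cast hq

theorem exponent_nonneg_of_sigmaExp_le {γ c θ : ℝ} (hγ : Irrational γ)
    (hσ : ∀ Q : ℕ, 2 ≤ Q → sigmaExp γ Q ≤ c * Real.logb 2 Q ^ θ) : 0 ≤ θ := by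
  by_contra! hθ
  have hlim : Tendsto (fun Q : ℕ ↦ c * Real.logb 2 Q ^ θ) atTop (nhds 0) := by
    have hdecay := (tendsto_rpow_neg_atTop (neg_pos.2 hθ)).comp tendsto_logb_two_natCast_atTop
    simpa [Function.comp_def] using hdecay.const_mul c
  obtain ⟨Q, hQ1, hQσ, hQ2⟩ := ((hlim.eventually_lt_const one_pos).and
    ((eventually_one_le_sigmaExp hγ).and (eventually_ge_atTop 2))).exists
  linarith [hσ Q hQ2]

/-- Quantitative tameness: every `n ≥ 1` with `log n ≤ L` has `‖nγ‖ ≥ 2 ^ (-B L ^ a)`. A bound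
`σ_γ(Q) ≪ (log Q) ^ θ` gives this with `a = 1 + θ`; the scale `L ≥ 1` is kept separate from `n`
so that `n = 1`, where `log n = 0`, is covered too. -/
def TameWith (γ B a : ℝ) : Prop :=
  ∀ L : ℝ, 1 ≤ L → ∀ n : ℕ, 1 ≤ n → (n : ℝ) ≤ 2 ^ L → (2 : ℝ) ^ (-(B * L ^ a)) ≤ dnint (n * γ)

theorem exists_tameWith {γ c θ : ℝ} (hγ : Irrational γ) (hθ : 0 ≤ θ)
    (hσ : ∀ Q : ℕ, 2 ≤ Q → sigmaExp γ Q ≤ c * Real.logb 2 Q ^ θ) :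
    ∃ B > 0, TameWith γ B (1 + θ) := by
  have hγ0 : 0 < dnint γ := by simpa using dnint_natCast_mul_pos hγ one_ne_zero
  obtain ⟨B, hBc, hBγ, hB⟩ := ((eventually_gt_atTop c).and
    ((eventually_ge_atTop (-Real.logb 2 (dnint γ))).and (eventually_gt_atTop 0))).exists
  refine ⟨B, hB, fun L hL n hn hnL ↦ ?_⟩
  have hLsplit : L ^ (1 + θ) = L * L ^ θ := by rw [Real.rpow_add (by linarith), Real.rpow_one]
  rcases hn.eq_or_lt with rfl | hn2
  · rw [Nat.cast_one, one_mul, ← Real.le_logb_iff_rpow_le one_lt_two hγ0]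
    have : B ≤ B * L ^ (1 + θ) := le_mul_of_one_le_right hB.le (Real.one_le_rpow hL (by linarith))
    linarith
  · have hn0 : (0 : ℝ) < n := by exact_mod_cast hn
    have hlog1 : 1 ≤ Real.logb 2 n := one_le_logb_two hn2
    have hlogL : Real.logb 2 n ≤ L := (Real.logb_le_iff_le_rpow one_lt_two hn0).2 hnL
    have hlt : sigmaExp γ n < B * L ^ θ :=
      calc sigmaExp γ n ≤ c * Real.logb 2 n ^ θ := hσ n hn2
        _ < B * Real.logb 2 n ^ θ := by gcongr
        _ ≤ B * L ^ θ := by gcongr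
    obtain ⟨σ, ⟨hσ0, hσn⟩, hσL⟩ :=
      exists_lt_of_csInf_lt (nonempty_setOf_rpow_neg_le_dnint hγ n) hlt
    calc (2 : ℝ) ^ (-(B * L ^ (1 + θ))) ≤ 2 ^ (-(Real.logb 2 n * σ)) := by
          refine Real.rpow_le_rpow_of_exponent_le one_le_two (neg_le_neg ?_)
          calc Real.logb 2 n * σ ≤ L * (B * L ^ θ) := by gcongr
            _ = B * L ^ (1 + θ) := by rw [hLsplit]; ring
      _ = (n : ℝ) ^ (-σ) := by
          rw [← mul_neg, Real.rpow_mul two_pos.le, Real.rpow_logb two_pos (by norm_num) hn0]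
      _ ≤ dnint (n * γ) := hσn n hn2 le_rfl

namespace TameWith

variable {γ B a δ c L : ℝ}

theorem exists_rat (hT : TameWith γ B a) (hB : 0 ≤ B) (hL : 1 ≤ L) :
    ∃ t : ℚ, |γ - t| ≤ 1 / (t.den : ℝ) ^ 2 ∧ (2 : ℝ) ^ L < t.den ∧
      (t.den : ℝ) ≤ 2 ^ (B * L ^ a) := by
  -- Dirichlet's theorem at the scale `2 ^ (B L ^ a)`; tameness excludes denominators `≤ 2 ^ L`.
  set R : ℝ := 2 ^ (B * L ^ a) with hR
  have hM : 0 < ⌊R⌋₊ := Nat.floor_pos.2 (Real.one_le_rpow one_le_two (by positivity))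
  obtain ⟨t, ht, htM⟩ := Real.exists_rat_abs_sub_le_and_den_le γ hM
  have htM' : (t.den : ℝ) ≤ ⌊R⌋₊ := by exact_mod_cast htM
  refine ⟨t, ht.trans ?_, ?_, htM'.trans (Nat.floor_le (by positivity))⟩
  · rw [sq]
    gcongr
    linarith
  · by_contra! hsmall
    have hlower : R⁻¹ ≤ dnint (t.den * γ) := by
      rw [hR, ← Real.rpow_neg two_pos.le]
      exact hT L hL t.den t.den_pos hsmall
    have hupper : dnint (t.den * γ) < R⁻¹ :=
      calc dnint (t.den * γ) ≤ |t.den * γ - t.num| := dnint_le _ _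
        _ = t.den * |γ - t| := by
            rw [← Nat.abs_cast t.den, ← abs_mul, Nat.abs_cast, mul_sub, Rat.cast_def t,
              mul_div_cancel₀ _ (by positivity)]
        _ ≤ t.den * (1 / ((⌊R⌋₊ + 1) * t.den)) := by gcongr
        _ = (⌊R⌋₊ + 1 : ℝ)⁻¹ := by field_simp
        _ < R⁻¹ := by gcongr; exact Nat.lt_floor_add_one R
    exact hlower.not_gt hupper

theorem card_returnSet_le (hT : TameWith γ B a) (hB : 0 ≤ B) (hL : 1 ≤ L) (hδ : 0 ≤ δ) {r : ℕ}
    (hr : (2 : ℝ) ^ (B * L ^ a + L) ≤ r) :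
    ((returnSet γ δ r).card : ℝ) ≤ r * (8 / 2 ^ L + 24 * L * δ) := by
  obtain ⟨t, ht, hLt, htB⟩ := hT.exists_rat hB hL
  set K := ⌊L⌋₊
  have hKL : (K : ℝ) ≤ L := Nat.floor_le (by linarith)
  have hLK : L ≤ K + 1 := (Nat.lt_floor_add_one L).le
  have htr : t.den * 2 ^ K ≤ r := by
    have : (t.den : ℝ) * 2 ^ K ≤ r :=
      calc (t.den : ℝ) * 2 ^ K ≤ 2 ^ (B * L ^ a) * 2 ^ L := by
            rw [← Real.rpow_natCast]
            gcongr
            exact one_le_two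
        _ = 2 ^ (B * L ^ a + L) := (Real.rpow_add two_pos _ _).symm
        _ ≤ r := hr
    exact_mod_cast this
  have hpow : (2 : ℝ) ^ L / 2 ≤ 2 ^ K := by
    rw [← Real.rpow_natCast, ← Real.rpow_sub_one two_ne_zero]
    exact Real.rpow_le_rpow_of_exponent_le one_le_two (by linarith)
  calc ((returnSet γ δ r).card : ℝ) ≤ r * (1 / 2 ^ K + 12 * (K + 1) * δ + 6 / t.den) :=
        card_returnSet_le_of_den_mul_two_pow_le ht hδ htr
    _ ≤ r * (1 / (2 ^ L / 2) + 12 * (L + L) * δ + 6 / 2 ^ L) := by gcongr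
    _ = r * (8 / 2 ^ L + 24 * L * δ) := by ring

theorem returnSet_eq_empty (hT : TameWith γ B a) (hL : 1 ≤ L) (hδ : 0 ≤ δ) {r : ℕ}
    (hrL : (r : ℝ) ≤ 2 ^ L) (hδr : δ * r < 2 ^ (-(B * L ^ a))) : returnSet γ δ r = ∅ := by
  refine Finset.eq_empty_of_forall_notMem fun s hs ↦ ?_
  obtain ⟨⟨hs1, hsr⟩, hdist⟩ := mem_returnSet.1 hs
  have hs1' : (1 : ℝ) ≤ s := by exact_mod_cast hs1
  have hlower : (2 : ℝ) ^ (-(B * L ^ a)) ≤ dnint (γ * (r - s)) := by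
    rw [mul_comm γ, ← Nat.cast_sub hsr.le]
    refine hT L hL (r - s) (by omega) (le_trans ?_ hrL)
    exact_mod_cast Nat.sub_le r s
  exact (hlower.trans (hdist.trans (div_le_self (by positivity) hs1'))).not_gt hδr

theorem card_returnSet_le_of_logb_le (hT : TameWith γ B a) (hB : 0 ≤ B) (hc : 0 ≤ c) {d r : ℕ}
    (hd : 2 ≤ d) (hr : 0 < r)
    (hdr : B * Real.logb 2 d ^ a + 2 * Real.logb 2 d ≤ Real.logb 2 (d * r : ℕ)) :
    ((returnSet γ (c / d) r).card : ℝ) ≤ r * ((24 * c + 8) * (Real.logb 2 d / d)) := by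
  have hd0 : (0 : ℝ) < d := by positivity
  have hr0 : (0 : ℝ) < r := by exact_mod_cast hr
  have hlog : 1 ≤ Real.logb 2 d := one_le_logb_two hd
  have hr' : (2 : ℝ) ^ (B * Real.logb 2 d ^ a + Real.logb 2 d) ≤ r := by
    rw [← Real.le_logb_iff_rpow_le one_lt_two hr0]
    rw [Nat.cast_mul, Real.logb_mul hd0.ne' hr0.ne'] at hdr
    linarith
  refine (hT.card_returnSet_le hB hlog (by positivity) hr').trans ?_
  rw [Real.rpow_logb two_pos (by norm_num) hd0]
  calc (r : ℝ) * (8 / d + 24 * Real.logb 2 d * (c / d))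
      ≤ r * (8 * Real.logb 2 d / d + 24 * Real.logb 2 d * (c / d)) := by
        gcongr
        linarith
    _ = r * ((24 * c + 8) * (Real.logb 2 d / d)) := by ring

theorem card_returnSet_le_of_two_rpow_le (hT : TameWith γ B a) (hB : 0 ≤ B) (ha : 1 ≤ a)
    (hc : 0 < c) {d r : ℕ} (hr : 0 < r) (hL : 1 ≤ L) (hd : (2 : ℝ) ^ (2 * L) ≤ d)
    (hdr : Real.logb 2 c + 2 * ((B + 1) * L ^ a) + B * ((B + 1) * L ^ a) ^ a
      < Real.logb 2 (d * r : ℕ)) :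
    ((returnSet γ (c / d) r).card : ℝ) ≤ r * ((24 * c + 8) / 2 ^ L) := by
  have hd0 : (0 : ℝ) < d := lt_of_lt_of_le (by positivity) hd
  have hr0 : (0 : ℝ) < r := by exact_mod_cast hr
  have hLpow : L ≤ 2 ^ L := by
    have := one_add_mul_self_le_rpow_one_add (s := 1) (by norm_num) hL
    norm_num at this
    linarith
  rcases le_or_gt ((2 : ℝ) ^ (B * L ^ a + L)) r with hlarge | hsmall
  · refine (hT.card_returnSet_le hB hL (by positivity) hlarge).trans ?_
    calc (r : ℝ) * (8 / 2 ^ L + 24 * L * (c / d))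
        ≤ r * (8 / 2 ^ L + 24 * 2 ^ L * (c / 2 ^ (2 * L))) := by gcongr
      _ = r * ((24 * c + 8) / 2 ^ L) := by
          rw [two_mul, Real.rpow_add two_pos]
          field_simp
          ring
  · set M := (B + 1) * L ^ a
    have hLa : L ≤ L ^ a := Real.self_le_rpow_of_one_le hL ha
    have hlogr : Real.logb 2 r ≤ M := by
      have := (Real.logb_lt_iff_lt_rpow one_lt_two hr0).2 hsmall
      linarith
    have hM1 : 1 ≤ M := one_le_mul_of_one_le_of_one_le (by linarith) (hL.trans hLa)
    have hδr : c / d * r < 2 ^ (-(B * M ^ a)) := by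
      rw [← Real.logb_lt_iff_lt_rpow one_lt_two (by positivity),
        Real.logb_mul (by positivity) hr0.ne', Real.logb_div hc.ne' hd0.ne']
      rw [Nat.cast_mul, Real.logb_mul hd0.ne' hr0.ne'] at hdr
      linarith
    rw [hT.returnSet_eq_empty hM1 (by positivity)
      ((Real.logb_le_iff_le_rpow one_lt_two hr0).1 hlogr) hδr, Finset.card_empty, Nat.cast_zero]
    positivity

end TameWith

theorem eventually_const_mul_rpow_le {p : ℝ} (hp : p < 1) (K : ℝ) {ε : ℝ} (hε : 0 < ε) :
    ∀ᶠ x : ℝ in atTop, K * x ^ p ≤ ε * x := by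
  have hlim := (tendsto_rpow_neg_atTop (sub_pos.2 hp)).const_mul K
  rw [mul_zero] at hlim
  filter_upwards [hlim.eventually_lt_const hε, eventually_gt_atTop 0] with x hx hx0
  calc K * x ^ p = K * x ^ (-(1 - p)) * x := by
        rw [mul_assoc, ← Real.rpow_add_one hx0.ne']
        congr 2
        ring
    _ ≤ ε * x := by gcongr

theorem eventually_two_mul_rpow_growth_le {a b : ℝ} (hb : b < 1) (hab : a * b < 1) (B : ℝ) :
    ∀ᶠ x : ℝ in atTop, B * (2 * x ^ b) ^ a + 2 * (2 * x ^ b) ≤ x := by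
  filter_upwards [eventually_const_mul_rpow_le (mul_comm a b ▸ hab) (B * 2 ^ a) one_half_pos,
    eventually_const_mul_rpow_le hb 4 one_half_pos, eventually_ge_atTop 0] with x h1 h2 hx
  rw [Real.mul_rpow two_pos.le (by positivity), ← Real.rpow_mul hx]
  linarith

theorem eventually_iterated_rpow_growth_lt {a b B : ℝ} (hB : 0 ≤ B) (hab : a * b < 1)
    (haab : a * a * b < 1) (D : ℝ) :
    ∀ᶠ x : ℝ in atTop,
      D + 2 * ((B + 1) * (x ^ b) ^ a) + B * ((B + 1) * (x ^ b) ^ a) ^ a < x := by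
  have hbaa : b * a * a < 1 := by linarith
  filter_upwards [eventually_const_mul_rpow_le (mul_comm a b ▸ hab) (2 * (B + 1))
      (show (0 : ℝ) < 1 / 4 by norm_num),
    eventually_const_mul_rpow_le hbaa (B * (B + 1) ^ a) (show (0 : ℝ) < 1 / 4 by norm_num),
    eventually_gt_atTop 0, eventually_gt_atTop (2 * D)] with x h1 h2 hx hD
  rw [Real.mul_rpow (by positivity) (by positivity), ← Real.rpow_mul hx.le,
    ← Real.rpow_mul hx.le]
  linarith

theorem card_divisors_le_two_pow_length_primeFactorsList {q : ℕ} (hq : q ≠ 0) :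
    q.divisors.card ≤ 2 ^ q.primeFactorsList.length := by
  induction q using Nat.recOnMul with
  | zero => exact absurd rfl hq
  | one => simp
  | prime p hp =>
    rw [hp.divisors, Nat.primeFactorsList_prime hp]
    exact Finset.card_le_two
  | mul m n ihm ihn =>
    obtain ⟨hm, hn⟩ := mul_ne_zero_iff.1 hq
    rw [(Nat.perm_primeFactorsList_mul hm hn).length_eq, List.length_append, pow_add,
      Nat.divisors_mul]
    exact Finset.card_mul_le.trans (Nat.mul_le_mul (ihm hm) (ihn hn))

/-- The divisor-weighted density `∑_{d ∣ q} |G_d| / (q / d)` of the return sets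
`G_d = returnSet γ (c / d) (q / d)`, to which the overlap sum at `q` reduces. -/
noncomputable def returnDensitySum (γ c : ℝ) (q : ℕ) : ℝ :=
  ∑ d ∈ q.divisors, ((returnSet γ (c / d) (q / d)).card : ℝ) / (q / d : ℕ)

theorem returnDensitySum_le_self (γ c : ℝ) (q : ℕ) : returnDensitySum γ c q ≤ q :=
  calc returnDensitySum γ c q ≤ ∑ _d ∈ q.divisors, (1 : ℝ) :=
        Finset.sum_le_sum fun d _ ↦ div_le_one_of_le₀
          (by exact_mod_cast card_returnSet_le_self γ (c / d) (q / d)) (Nat.cast_nonneg _)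
    _ = q.divisors.card := by rw [Finset.sum_const, nsmul_one]
    _ ≤ q := by exact_mod_cast Nat.card_divisors_le_self q

theorem logb_two_div_self_nonneg (n : ℕ) : 0 ≤ Real.logb 2 n / n := by
  rcases n.eq_zero_or_pos with rfl | hn
  · simp
  · exact div_nonneg (Real.logb_nonneg one_lt_two (by exact_mod_cast hn)) (Nat.cast_nonneg n)

namespace TameWith

variable {γ B a b c : ℝ}

theorem card_returnSet_div_le (hT : TameWith γ B a) (hB : 0 ≤ B) (ha : 1 ≤ a) (hc : 0 < c)
    {L : ℝ} (hL : 1 ≤ L) {d r : ℕ} (hd : 0 < d) (hr : 0 < r)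
    (hsmall : B * (2 * L) ^ a + 2 * (2 * L) ≤ Real.logb 2 (d * r : ℕ))
    (hlarge : Real.logb 2 c + 2 * ((B + 1) * L ^ a) + B * ((B + 1) * L ^ a) ^ a
      < Real.logb 2 (d * r : ℕ)) :
    ((returnSet γ (c / d) r).card : ℝ) / r ≤
      (24 * c + 8) * (Real.logb 2 d / d) + (if d = 1 then 1 else 0) + (24 * c + 8) / 2 ^ L := by
  have hd0 : (0 : ℝ) < d := by exact_mod_cast hd
  have hr0 : (0 : ℝ) < r := by exact_mod_cast hr
  have hlog : 0 ≤ (24 * c + 8) * (Real.logb 2 d / d) :=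
    mul_nonneg (by positivity) (logb_two_div_self_nonneg d)
  have hpow : 0 ≤ (24 * c + 8) / (2 : ℝ) ^ L := by positivity
  rcases eq_or_ne d 1 with rfl | hd1
  · have : ((returnSet γ (c / (1 : ℕ)) r).card : ℝ) / r ≤ 1 :=
      div_le_one_of_le₀ (by exact_mod_cast card_returnSet_le_self _ _ _) hr0.le
    rw [if_pos rfl]
    linarith
  rw [if_neg hd1, add_zero]
  rcases le_or_gt (Real.logb 2 d) (2 * L) with hdL | hdL
  · have hd2 : 2 ≤ d := by omega
    have hlog0 : 0 ≤ Real.logb 2 d := zero_le_one.trans (one_le_logb_two hd2)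
    refine le_add_of_le_of_nonneg ((div_le_iff₀' hr0).2 ?_) hpow
    refine hT.card_returnSet_le_of_logb_le hB hc.le hd2 hr (le_trans ?_ hsmall)
    gcongr
  · refine le_add_of_nonneg_of_le hlog ((div_le_iff₀' hr0).2 ?_)
    exact hT.card_returnSet_le_of_two_rpow_le hB ha hc hr hL
      ((Real.le_logb_iff_rpow_le one_lt_two hd0).1 hdL.le) hlarge

theorem returnDensitySum_le (hT : TameWith γ B a) (hB : 0 ≤ B) (ha : 1 ≤ a) (hc : 0 < c)
    {L : ℝ} (hL : 1 ≤ L) {q : ℕ} (hq : 0 < q) (hΩ : (q.primeFactorsList.length : ℝ) ≤ L)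
    (hsmall : B * (2 * L) ^ a + 2 * (2 * L) ≤ Real.logb 2 q)
    (hlarge : Real.logb 2 c + 2 * ((B + 1) * L ^ a) + B * ((B + 1) * L ^ a) ^ a
      < Real.logb 2 q) :
    returnDensitySum γ c q ≤
      (24 * c + 8) * ∑ d ∈ q.divisors, Real.logb 2 d / d + (24 * c + 9) := by
  have hcard : (q.divisors.card : ℝ) ≤ 2 ^ L :=
    calc (q.divisors.card : ℝ) ≤ 2 ^ q.primeFactorsList.length := by
          exact_mod_cast card_divisors_le_two_pow_length_primeFactorsList hq.ne'
      _ ≤ 2 ^ L := by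
          rw [← Real.rpow_natCast]
          exact Real.rpow_le_rpow_of_exponent_le one_le_two hΩ
  have hterm : ∀ d ∈ q.divisors, ((returnSet γ (c / d) (q / d)).card : ℝ) / (q / d : ℕ) ≤
      (24 * c + 8) * (Real.logb 2 d / d) + (if d = 1 then 1 else 0) + (24 * c + 8) / 2 ^ L := by
    intro d hd
    have hdr : d * (q / d) = q := Nat.mul_div_cancel' (Nat.dvd_of_mem_divisors hd)
    exact hT.card_returnSet_div_le hB ha hc hL (Nat.pos_of_mem_divisors hd)
      (Nat.div_pos (Nat.divisor_le hd) (Nat.pos_of_mem_divisors hd))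
      (hdr.symm ▸ hsmall) (hdr.symm ▸ hlarge)
  calc returnDensitySum γ c q
      ≤ ∑ d ∈ q.divisors, ((24 * c + 8) * (Real.logb 2 d / d) + (if d = 1 then 1 else 0) +
          (24 * c + 8) / 2 ^ L) := Finset.sum_le_sum hterm
    _ = (24 * c + 8) * ∑ d ∈ q.divisors, Real.logb 2 d / d + 1 +
          q.divisors.card / 2 ^ L * (24 * c + 8) := by
        rw [Finset.sum_add_distrib, Finset.sum_add_distrib, ← Finset.mul_sum, Finset.sum_ite_eq',
          if_pos (Nat.one_mem_divisors.2 hq.ne'), Finset.sum_const, nsmul_eq_mul]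
        ring
    _ ≤ (24 * c + 8) * ∑ d ∈ q.divisors, Real.logb 2 d / d + 1 + 1 * (24 * c + 8) := by
        gcongr
        exact div_le_one_of_le₀ hcard (by positivity)
    _ = (24 * c + 8) * ∑ d ∈ q.divisors, Real.logb 2 d / d + (24 * c + 9) := by ring

theorem eventually_returnDensitySum_le (hT : TameWith γ B a) (hB : 0 ≤ B) (ha : 1 ≤ a)
    (hb : 0 < b) (hab : a ^ 2 * b < 1) (hc : 0 < c) :
    ∀ᶠ q : ℕ in atTop, (q.primeFactorsList.length : ℝ) ≤ Real.logb 2 q ^ b →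
      returnDensitySum γ c q ≤
        (24 * c + 8) * ∑ d ∈ q.divisors, Real.logb 2 d / d + (24 * c + 9) := by
  have hab₁ : a * b < 1 := by nlinarith
  have hb₁ : b < 1 := by nlinarith
  filter_upwards [eventually_ge_atTop 2,
    tendsto_logb_two_natCast_atTop.eventually (eventually_two_mul_rpow_growth_le hb₁ hab₁ B),
    tendsto_logb_two_natCast_atTop.eventually
      (eventually_iterated_rpow_growth_lt hB hab₁ (sq a ▸ hab) (Real.logb 2 c))]
    with q hq hsmall hlarge hΩ
  exact hT.returnDensitySum_le hB ha hc (Real.one_le_rpow (one_le_logb_two hq) hb.le)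
    (by omega) hΩ hsmall hlarge

end TameWith

/-- The overlap sum `∑_{1 ≤ q' < q} (ψ(q)/q) gcd(q', q) 𝟙[‖γ(q - q')/gcd‖ ≤ Δ(q, q')/gcd]` to be
bounded. -/
noncomputable def overlapSum (γ : ℝ) (ψ : ℕ → ℝ) (q : ℕ) : ℝ :=
  ∑ q' ∈ Finset.Ico 1 q, (ψ q / q) * (Nat.gcd q' q : ℝ) *
    (if dnint (γ * ((q : ℝ) - q') / (Nat.gcd q q' : ℝ))
        ≤ Δfun ψ q q' / (Nat.gcd q q' : ℝ) then 1 else 0)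

section OverlapSum

variable {γ C : ℝ} {ψ : ℕ → ℝ}

theorem Δfun_le (hC : 0 ≤ C) (hub : ∀ q : ℕ, 1 ≤ q → ψ q ≤ C / q) {q q' : ℕ} (hq' : 1 ≤ q')
    (hqq' : q' ≤ q) : Δfun ψ q q' ≤ 2 * C * q / q' := by
  have hq'0 : (0 : ℝ) < q' := by exact_mod_cast hq'
  have hqq'0 : (q' : ℝ) ≤ q := by exact_mod_cast hqq'
  have hq0 : (0 : ℝ) < q := hq'0.trans_le hqq'0
  calc Δfun ψ q q' ≤ q * (C / q') + q' * (C / q) := by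
        rw [Δfun]
        gcongr
        · exact hub q' hq'
        · exact hub q (hq'.trans hqq')
    _ ≤ q * (C / q') + q * (C / q') := by gcongr
    _ = 2 * C * q / q' := by ring

theorem card_filter_gcd_eq_le (hC : 0 ≤ C) (hub : ∀ q : ℕ, 1 ≤ q → ψ q ≤ C / q) {d r : ℕ}
    (hd : 0 < d) :
    ({q' ∈ Finset.Ico 1 (d * r) | Nat.gcd q' (d * r) = d ∧
      dnint (γ * ((d * r : ℕ) - q') / d) ≤ Δfun ψ (d * r) q' / d}).card ≤
      (returnSet γ (2 * C / d) r).card := by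
  have hsub : {q' ∈ Finset.Ico 1 (d * r) | Nat.gcd q' (d * r) = d ∧
      dnint (γ * ((d * r : ℕ) - q') / d) ≤ Δfun ψ (d * r) q' / d} ⊆
      (returnSet γ (2 * C / d) r).image (d * ·) := by
    intro q' hq'
    obtain ⟨hIco, hgcd, hclose⟩ := Finset.mem_filter.1 hq'
    obtain ⟨s, rfl⟩ : d ∣ q' := hgcd ▸ Nat.gcd_dvd_left q' (d * r)
    obtain ⟨hpos, hlt⟩ := Finset.mem_Ico.1 hIco
    have hs : 1 ≤ s := Nat.pos_of_mul_pos_left hpos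
    refine Finset.mem_image_of_mem _ (mem_returnSet.2 ⟨⟨hs, Nat.lt_of_mul_lt_mul_left hlt⟩, ?_⟩)
    calc dnint (γ * (r - s)) = dnint (γ * ((d * r : ℕ) - (d * s : ℕ)) / d) := by
          congr 1
          push_cast
          field_simp
      _ ≤ Δfun ψ (d * r) (d * s) / d := hclose
      _ ≤ 2 * C * (d * r : ℕ) / (d * s : ℕ) / d := by
          gcongr
          exact Δfun_le hC hub hpos hlt.le
      _ = 2 * C / d * r / s := by
          push_cast
          field_simp
  exact (Finset.card_le_card hsub).trans Finset.card_image_le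

theorem overlapSum_le (hC : 0 ≤ C) (hψ : ∀ q, 0 ≤ ψ q) (hub : ∀ q : ℕ, 1 ≤ q → ψ q ≤ C / q)
    {q : ℕ} (hq : 0 < q) : overlapSum γ ψ q ≤ ψ q * returnDensitySum γ (2 * C) q := by
  have hmaps : ∀ q' ∈ Finset.Ico 1 q, Nat.gcd q' q ∈ q.divisors := fun q' _ ↦
    Nat.mem_divisors.2 ⟨Nat.gcd_dvd_right q' q, hq.ne'⟩
  rw [overlapSum, ← Finset.sum_fiberwise_of_maps_to hmaps, returnDensitySum, Finset.mul_sum]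
  refine Finset.sum_le_sum fun d hd ↦ ?_
  have hd0 := Nat.pos_of_mem_divisors hd
  obtain ⟨r, rfl⟩ := Nat.dvd_of_mem_divisors hd
  rw [Nat.mul_div_cancel_left r hd0]
  calc _ = ∑ q' ∈ Finset.Ico 1 (d * r) with Nat.gcd q' (d * r) = d, ψ (d * r) / (d * r : ℕ) * d *
          (if dnint (γ * ((d * r : ℕ) - q') / d) ≤ Δfun ψ (d * r) q' / d then 1 else 0) :=
        Finset.sum_congr rfl fun q' hq' ↦ by
          rw [Nat.gcd_comm (d * r) q', (Finset.mem_filter.1 hq').2]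
    _ = ψ (d * r) / r * ({q' ∈ Finset.Ico 1 (d * r) | Nat.gcd q' (d * r) = d ∧
          dnint (γ * ((d * r : ℕ) - q') / d) ≤ Δfun ψ (d * r) q' / d}).card := by
        rw [← Finset.mul_sum, Finset.sum_boole, Finset.filter_filter]
        congr 1
        push_cast
        field_simp
    _ ≤ ψ (d * r) / r * (returnSet γ (2 * C / d) r).card := by
        refine mul_le_mul_of_nonneg_left ?_ (div_nonneg (hψ _) (Nat.cast_nonneg _))
        exact_mod_cast card_filter_gcd_eq_le hC hub hd0
    _ = ψ (d * r) * ((returnSet γ (2 * C / d) r).card / r) := by ring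

end OverlapSum

theorem sq_mul_lt_one_of_lt {a b : ℝ} (ha : 1 ≤ a) (hb : b < 3 - 2 * a) : a ^ 2 * b < 1 :=
  calc a ^ 2 * b < a ^ 2 * (3 - 2 * a) := by gcongr
    _ = 1 - (a - 1) ^ 2 * (2 * a + 1) := by ring
    _ ≤ 1 := sub_le_self _ (by positivity)

theorem stmt10_general {γ : ℝ} (hγ : Irrational γ) {c θ : ℝ}
    (htame : ∀ Q : ℕ, 2 ≤ Q → sigmaExp γ Q ≤ c * Real.logb 2 Q ^ θ)
    {b : ℝ} (hb : 0 < b) (hθb : (1 + θ) ^ 2 * b < 1) {C : ℝ} (hC : 0 < C)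
    {ψ : ℕ → ℝ} (hψ : ∀ q, 0 ≤ ψ q) (hub : ∀ q : ℕ, 1 ≤ q → ψ q ≤ C / (q : ℝ))
    (hΩ : ∀ q : ℕ, 1 ≤ q → (q.primeFactorsList.length : ℝ) > Real.logb 2 q ^ b → ψ q = 0) :
    ∃ C' > (0 : ℝ), ∃ C'' > (0 : ℝ), ∀ q : ℕ, 1 ≤ q →
      overlapSum γ ψ q ≤ C' * ψ q * (∑ r ∈ q.divisors, Real.logb 2 r / r) + C'' * ψ q := by
  have hθ : 0 ≤ θ := exponent_nonneg_of_sigmaExp_le hγ htame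
  obtain ⟨B, hB, hT⟩ := exists_tameWith hγ hθ htame
  obtain ⟨q₀, hq₀⟩ := eventually_atTop.1 (hT.eventually_returnDensitySum_le hB.le
    (le_add_of_nonneg_right hθ) hb hθb (c := 2 * C) (by positivity))
  set K := 24 * (2 * C) + 8
  refine ⟨K, by positivity, K + 1 + q₀, by positivity, fun q hq ↦ ?_⟩
  have hsum : 0 ≤ K * ∑ r ∈ q.divisors, Real.logb 2 r / r :=
    mul_nonneg (by positivity) (Finset.sum_nonneg fun r _ ↦ logb_two_div_self_nonneg r)
  have hbound : ψ q = 0 ∨ returnDensitySum γ (2 * C) q ≤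
      K * ∑ r ∈ q.divisors, Real.logb 2 r / r + (K + 1 + q₀) := by
    rcases lt_or_ge q q₀ with hlt | hge
    · have hself := returnDensitySum_le_self γ (2 * C) q
      have hqq₀ : (q : ℝ) ≤ q₀ := by exact_mod_cast hlt.le
      have : 0 ≤ K := by positivity
      right
      linarith
    · refine or_iff_not_imp_left.2 fun hne ↦ ?_
      have hdensity := hq₀ q hge (not_lt.1 fun h ↦ hne (hΩ q hq h))
      have : (0 : ℝ) ≤ q₀ := Nat.cast_nonneg q₀
      linarith
  calc overlapSum γ ψ q ≤ ψ q * returnDensitySum γ (2 * C) q := overlapSum_le hC.le hψ hub hq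
    _ ≤ ψ q * (K * ∑ r ∈ q.divisors, Real.logb 2 r / r + (K + 1 + q₀)) := by
        rcases hbound with h | h
        · simp only [h, zero_mul, le_refl]
        · exact mul_le_mul_of_nonneg_left h (hψ q)
    _ = K * ψ q * (∑ r ∈ q.divisors, Real.logb 2 r / r) + (K + 1 + q₀) * ψ q := by ring

open Classical in
theorem stmt10 (γ : ℝ) (hγ : Irrational γ)
    (ε₀ Cγ : ℝ) (hε₀ : 0 < ε₀) (hCγ : 0 < Cγ)
    (htame : ∀ Q : ℕ, 2 ≤ Q → sigmaExp γ Q ≤ Cγ * (Real.logb 2 Q) ^ ((1:ℝ)/4 - ε₀))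
    (ε₁ : ℝ) (hε₁ : 0 < ε₁) (hε₁' : ε₁ < 2 * ε₀)
    (C : ℝ) (hC : 0 < C)
    (ψ : ℕ → ℝ) (hψ0 : ∀ q, 0 ≤ ψ q)
    (hub : ∀ q : ℕ, 1 ≤ q → ψ q ≤ C / (q : ℝ))
    (hψ1 : ψ 1 = 0) (hψ2 : ψ 2 = 0)
    (hΩ : ∀ q : ℕ, 1 ≤ q →
      ((q.primeFactorsList.length : ℝ) > (Real.logb 2 q) ^ ((1:ℝ)/2 + ε₁) → ψ q = 0)) :
    ∃ C' > (0:ℝ), ∃ C'' > (0:ℝ), ∀ q : ℕ, 16 ≤ q →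
      ∑ q' ∈ Finset.Ico 1 q, (ψ q / q) * (Nat.gcd q' q : ℝ) *
        (if dnint (γ * ((q : ℝ) - q') / (Nat.gcd q q' : ℝ))
            ≤ Δfun ψ q q' / (Nat.gcd q q' : ℝ) then 1 else 0)
      ≤ C' * ψ q * (∑ r ∈ q.divisors, Real.logb 2 r / r)
        + C'' * ψ q := by
  have hθ := exponent_nonneg_of_sigmaExp_le hγ htame
  obtain ⟨C', hC', C'', hC'', h⟩ := stmt10_general hγ htame (b := 1 / 2 + ε₁) (by positivity)
    (sq_mul_lt_one_of_lt (by linarith) (by linarith)) hC hψ0 hub hΩ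
  exact ⟨C', hC', C'', hC'', fun q hq ↦ h q (by omega)⟩
end

section
/- Let γ be an irrational number, C > 0 and 0 < ε₁ < 1/2, and let ψ be an approximation function satisfying ψ(q) ≤ C·q⁻¹(log log q)⁻² for all q ≥ 3, ψ(1) = ψ(2) = 0, and ψ(q) = 0 whenever Ω(q) > (log q)^{1/2 + ε₁}. Then there exist constants C′, C″ > 0 (depending only on C and ε₁) with the following property: for every integer Q ≥ 2^{1000} and every integer σ ≥ 14 such that ‖Qγ‖ < Q^{−σ}, such that the nearest integer v to Qγ satisfies gcd(v,Q) = 1, and such that d(q)·log q ≤ Q for every integer q ≤ Q^{σ/2} with ψ(q) ≠ 0, one has for every integer q ∈ [Q⁷, Q^{σ/2}]: ∑_{1 ≤ q′ < q} (ψ(q)/q)·gcd(q′,q)·𝟙[‖γ(q − q′)/gcd(q,q′)‖ ≤ Δ(q,q′)/gcd(q,q′)] ≤ C′·ψ(q)·(log log q)⁻²·∑_{r | q} (log r)/r + C″·ψ(q). -/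
open MeasureTheory Filter Real

/-!
Sort the `q'` by `g = gcd(q', q)` and write `q' = g m`, `q = g r`, `L = log log q`. Unless
`q' < √q`, the condition on `q'` forces `‖γ (r - m)‖ ≤ A / m` with `A ≍ r / (g L²)`. Let `v / Q` be
the given fraction, so that `γ ≈ v / Q` with a negligible error. If `Q` does not divide `n = r - m`,
then `t = v n - Q · round (γ n)` is a nonzero integer, `|t| ≤ 2 Q ‖γ n‖`, and `t` determines `n`
modulo `Q`. Hence at most `4 Q δ` of any `Q` consecutive `m` have `‖γ (r - m)‖ ≤ δ`. Discard the
`m ≤ r / (g L²)`; summing over the blocks of length `Q` that remain gives a harmonic sum, so that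
`≪ A (1 + log (g L²))` of the `m ≥ Q` are left. Multiplied by `g / q = 1 / r`, this and the
discarded part are `≪ (1 + log (g L²)) / (g L²)`, which is `≪ L⁻² (log g) / g` if `g ≥ L` and
`≪ 1 / g²` otherwise, and the latter is summable over `g`. All other `m`, those below `√q / g` or
`Q` and those congruent to `r` modulo `Q`, number `O(r / Q)`; over the divisors `g` of `q` they
add up to `O(d(q) / Q) = O(1)`.
-/

lemma sum_Icc_inv_le_one_add_log {a b : ℕ} (ha : 0 < a) (hab : a ≤ b) :
    ∑ k ∈ Finset.Icc a b, (k : ℝ)⁻¹ ≤ 1 + Real.log (b / a) := by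
  induction b, hab using Nat.le_induction with
  | base => simpa [ha.ne'] using Nat.cast_inv_le_one a
  | succ b hab ih =>
    have hb : (0 : ℝ) < b := by exact_mod_cast ha.trans_le hab
    have hstep : ((b + 1 : ℕ) : ℝ)⁻¹ ≤ Real.log ((b + 1 : ℕ) / b) := by
      convert Real.one_sub_inv_le_log_of_pos (x := ((b + 1 : ℕ) / b : ℝ)) (by positivity) using 1
      push_cast
      field_simp
      ring
    calc ∑ k ∈ Finset.Icc a (b + 1), (k : ℝ)⁻¹
        = ∑ k ∈ Finset.Icc a b, (k : ℝ)⁻¹ + ((b + 1 : ℕ) : ℝ)⁻¹ :=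
          Finset.sum_Icc_succ_top (by lia) _
      _ ≤ 1 + Real.log (b / a) + Real.log ((b + 1 : ℕ) / b) := add_le_add ih hstep
      _ = 1 + Real.log ((b + 1 : ℕ) / a) := by
        rw [add_assoc, ← Real.log_mul (by positivity) (by positivity)]
        congr 2
        field_simp

lemma sum_divisors_inv_sq_le_two (n : ℕ) : ∑ d ∈ n.divisors, ((d : ℝ) ^ 2)⁻¹ ≤ 2 := by
  have hsub : n.divisors ⊆ Finset.Ioo 0 (n + 1) := fun d hd ↦ Finset.mem_Ioo.2
    ⟨Nat.pos_of_mem_divisors hd, Nat.lt_succ_of_le (Nat.divisor_le hd)⟩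
  calc ∑ d ∈ n.divisors, ((d : ℝ) ^ 2)⁻¹
      ≤ ∑ d ∈ Finset.Ioo 0 (n + 1), ((d : ℝ) ^ 2)⁻¹ :=
        Finset.sum_le_sum_of_subset_of_nonneg hsub fun _ _ _ ↦ by positivity
    _ ≤ 2 := by simpa using sum_Ioo_inv_sq_le (α := ℝ) 0 (n + 1)

lemma card_le_of_forall_pos_of_forall_le {S : Finset ℕ} {x : ℝ} (hx : 0 ≤ x)
    (hpos : ∀ m ∈ S, 0 < m) (hle : ∀ m ∈ S, (m : ℝ) ≤ x) : (S.card : ℝ) ≤ x := by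
  have hsub : S ⊆ Finset.Ioc 0 ⌊x⌋₊ := fun m hm ↦
    Finset.mem_Ioc.2 ⟨hpos m hm, Nat.le_floor (hle m hm)⟩
  have hcard : S.card ≤ ⌊x⌋₊ := by simpa using Finset.card_le_card hsub
  exact (Nat.cast_le.2 hcard).trans (Nat.floor_le hx)

lemma one_add_log_div_le {g L : ℝ} (hg : 1 ≤ g) (hL : 2 ≤ L) :
    (1 + Real.log (2 * g * L ^ 2)) / (g * L ^ 2)
      ≤ 5 * (L⁻¹ ^ 2 * (Real.logb 2 g / g)) + 3 * (g ^ 2)⁻¹ := by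
  have hlogb : 0 ≤ Real.logb 2 g := Real.logb_nonneg (by norm_num) hg
  -- For `g ≥ L` the logarithm is `O(log g)`; for `g ≤ L` it is `O(L)`, and `1 / (g L) ≤ 1 / g²`.
  rcases le_total L g with hLg | hgL
  · have hlog : Real.log (2 * g * L ^ 2) ≤ 4 * Real.log g := by
      calc Real.log (2 * g * L ^ 2) ≤ Real.log (g ^ 4) :=
            Real.log_le_log (by positivity) (by
              calc 2 * g * L ^ 2 ≤ g * g * g ^ 2 := by gcongr; linarith
                _ = g ^ 4 := by ring)
        _ = 4 * Real.log g := by simp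
    have hone : 1 ≤ Real.logb 2 g := by
      simpa using Real.logb_le_logb_of_le (b := 2) (by norm_num) (by norm_num) (hL.trans hLg)
    have hlog2 : Real.log g ≤ Real.logb 2 g :=
      le_div_self (Real.log_nonneg hg) (Real.log_pos (by norm_num))
        (by linarith [Real.log_two_lt_d9])
    calc (1 + Real.log (2 * g * L ^ 2)) / (g * L ^ 2)
        ≤ (5 * Real.logb 2 g) / (g * L ^ 2) := by gcongr; linarith
      _ = 5 * (L⁻¹ ^ 2 * (Real.logb 2 g / g)) := by field_simp
      _ ≤ _ := le_add_of_nonneg_right (by positivity)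
  · have hlog : Real.log (2 * g * L ^ 2) ≤ 3 * L - 1 := by
      calc Real.log (2 * g * L ^ 2) ≤ Real.log (2 * L ^ 3) :=
            Real.log_le_log (by positivity) (by
              calc 2 * g * L ^ 2 ≤ 2 * L * L ^ 2 := by gcongr
                _ = 2 * L ^ 3 := by ring)
        _ = Real.log 2 + 3 * Real.log L := by
          rw [Real.log_mul (by norm_num) (by positivity), Real.log_pow]; norm_num
        _ ≤ 3 * L - 1 := by
          linarith [Real.log_le_sub_one_of_pos (show 0 < L by linarith), Real.log_two_lt_d9]
    calc (1 + Real.log (2 * g * L ^ 2)) / (g * L ^ 2)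
        ≤ 3 * L / (g * L ^ 2) := by gcongr; linarith
      _ = 3 * (g * L)⁻¹ := by field_simp
      _ ≤ 3 * (g ^ 2)⁻¹ := by rw [pow_two]; gcongr
      _ ≤ _ := le_add_of_nonneg_left (by positivity)

lemma mul_sub_mul_ne_zero_of_not_dvd {Q v n : ℤ} (hv : IsCoprime Q v) (hn : ¬ Q ∣ n) (k : ℤ) :
    v * n - Q * k ≠ 0 :=
  fun h ↦ hn (hv.dvd_of_dvd_mul_left ⟨k, sub_eq_zero.1 h⟩)

lemma abs_mul_sub_mul_round_le {γ : ℝ} {Q : ℕ} {v n : ℤ} (hv : IsCoprime (Q : ℤ) v)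
    (hn : ¬ (Q : ℤ) ∣ n) (hγ : |(n : ℝ)| * |Q * γ - v| ≤ 1 / 2) :
    |((v * n - Q * round (γ * n) : ℤ) : ℝ)| ≤ 2 * Q * dnint (γ * n) := by
  have hone : 1 ≤ |((v * n - Q * round (γ * n) : ℤ) : ℝ)| := by
    exact_mod_cast Int.one_le_abs (mul_sub_mul_ne_zero_of_not_dvd hv hn (round (γ * n)))
  have hle : |((v * n - Q * round (γ * n) : ℤ) : ℝ)| ≤ Q * dnint (γ * n) + 1 / 2 := by
    calc |((v * n - Q * round (γ * n) : ℤ) : ℝ)|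
        = |Q * (γ * n - round (γ * n)) - n * (Q * γ - v)| := by push_cast; congr 1; ring
      _ ≤ |Q * (γ * n - round (γ * n))| + |n * (Q * γ - v)| := abs_sub _ _
      _ = Q * dnint (γ * n) + |(n : ℝ)| * |Q * γ - v| := by
        rw [abs_mul, abs_mul, Nat.abs_cast, dnint]
      _ ≤ Q * dnint (γ * n) + 1 / 2 := by gcongr
  linarith

lemma card_le_of_dnint_le_s11 {ι : Type*} {γ δ : ℝ} {Q : ℕ} {v : ℤ} {S : Finset ι} {n : ι → ℤ}
    (hv : IsCoprime (Q : ℤ) v) (hδ : 0 ≤ δ)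
    (hinj : Set.InjOn (fun i ↦ (n i : ZMod Q)) S) (hn : ∀ i ∈ S, ¬ (Q : ℤ) ∣ n i)
    (hγ : ∀ i ∈ S, |(n i : ℝ)| * |Q * γ - v| ≤ 1 / 2) (hS : ∀ i ∈ S, dnint (γ * n i) ≤ δ) :
    (S.card : ℝ) ≤ 4 * Q * δ := by
  let t : ι → ℤ := fun i ↦ v * n i - Q * round (γ * n i)
  have ht : Set.MapsTo t S ((Finset.Icc (-⌊2 * Q * δ⌋) ⌊2 * Q * δ⌋).erase 0) := by
    intro i hi
    have hne : t i ≠ 0 := mul_sub_mul_ne_zero_of_not_dvd hv (hn i hi) _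
    have hle : |t i| ≤ ⌊2 * Q * δ⌋ := Int.le_floor.2 <| by
      rw [Int.cast_abs]
      exact (abs_mul_sub_mul_round_le hv (hn i hi) (hγ i hi)).trans
        (by gcongr; exact hS i hi)
    exact Finset.mem_erase.2 ⟨hne, Finset.mem_Icc.2 (abs_le.1 hle)⟩
  have htinj : Set.InjOn t S := by
    intro i hi j hj hij
    refine hinj hi hj ((ZMod.intCast_eq_intCast_iff_dvd_sub _ _ _).2 ?_)
    exact hv.dvd_of_dvd_mul_left ⟨round (γ * n j) - round (γ * n i), by grind⟩
  have hcard := Finset.card_le_card_of_injOn t ht htinj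
  have hfloor : 0 ≤ ⌊2 * Q * δ⌋ := Int.floor_nonneg.2 (by positivity)
  rw [Finset.card_erase_of_mem (by simpa using hfloor), Int.card_Icc] at hcard
  have hcard' : (S.card : ℤ) ≤ 2 * ⌊2 * Q * δ⌋ := by lia
  calc (S.card : ℝ) ≤ 2 * ⌊2 * Q * δ⌋ := by exact_mod_cast hcard'
    _ ≤ 2 * (2 * Q * δ) := by gcongr; exact Int.floor_le _
    _ = 4 * Q * δ := by ring

lemma card_Ico_filter_modEq_self_le (Q r : ℕ) :
    ({m ∈ Finset.Ico 1 r | m ≡ r [MOD Q]}.card : ℝ) ≤ r / Q := by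
  have hmaps : Set.MapsTo (r - ·) ({m ∈ Finset.Ico 1 r | m ≡ r [MOD Q]} : Finset ℕ)
      ({n ∈ Finset.Ioc 0 r | Q ∣ n} : Finset ℕ) := by
    intro m hm
    obtain ⟨hmr, hmod⟩ := Finset.mem_filter.1 hm
    have hlt : m < r := (Finset.mem_Ico.1 hmr).2
    exact Finset.mem_filter.2
      ⟨Finset.mem_Ioc.2 ⟨Nat.sub_pos_of_lt hlt, r.sub_le m⟩, (Nat.modEq_iff_dvd' hlt.le).1 hmod⟩
  have hinj : Set.InjOn (r - ·) (({m ∈ Finset.Ico 1 r | m ≡ r [MOD Q]} : Finset ℕ) : Set ℕ) := by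
    intro a ha b hb hab
    simp only [Finset.coe_filter, Finset.mem_Ico, Set.mem_ofPred_eq] at ha hb hab
    lia
  have hcard := Finset.card_le_card_of_injOn _ hmaps hinj
  rw [Nat.Ioc_filter_dvd_card_eq_div] at hcard
  exact (Nat.cast_le.2 hcard).trans Nat.cast_div_le

lemma sum_Icc_max_floor_inv_le {Q r : ℕ} {X : ℝ} (hQ : 0 < Q) (hX : 0 < X) (hXr : X ≤ r) :
    ∑ k ∈ Finset.Icc (max 1 ⌊X / Q⌋₊) (r / Q), (k : ℝ)⁻¹ ≤ 1 + Real.log (2 * r / X) := by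
  set a : ℕ := max 1 ⌊X / Q⌋₊
  have hX' : X < 2 * Q * a := by
    have hfloor : X / Q < 2 * a := by
      have hlt := Nat.lt_floor_add_one (X / Q)
      have h1 : (1 : ℝ) ≤ a := by exact_mod_cast le_max_left _ _
      have h2 : (⌊X / Q⌋₊ : ℝ) ≤ a := by exact_mod_cast le_max_right _ _
      linarith
    rw [div_lt_iff₀ (by positivity)] at hfloor
    linarith
  rcases lt_or_ge (r / Q) a with hlt | hle
  · have hlog : 0 ≤ Real.log (2 * r / X) :=
      Real.log_nonneg ((one_le_div hX).2 (by linarith))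
    rw [Finset.Icc_eq_empty_of_lt hlt, Finset.sum_empty]
    positivity
  · have ha0 : 0 < a := by positivity
    have hb0 : 0 < r / Q := ha0.trans_le hle
    refine (sum_Icc_inv_le_one_add_log ha0 hle).trans ?_
    gcongr 1 + Real.log ?_
    rw [div_le_div_iff₀ (by positivity) hX]
    calc ((r / Q : ℕ) : ℝ) * X ≤ r / Q * (2 * Q * a) := by gcongr; exact Nat.cast_div_le
      _ = 2 * r * a := by field_simp

/-- The `m ∈ [1, r)` outside the residue class of `r` modulo `Q` for which `γ (r - m)` is within
`A / m` of an integer; `A / m` is the shape of `Δ(q, q') / gcd(q, q')` when `q' = gcd(q, q') m`. -/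
noncomputable def nearIntegerSet (γ A : ℝ) (Q r : ℕ) : Finset ℕ :=
  {m ∈ Finset.Ico 1 r | ¬ m ≡ r [MOD Q] ∧ dnint (γ * (r - m)) ≤ A / m}

section NearIntegerSet

variable {γ A δ X : ℝ} {Q r k m : ℕ} {v : ℤ}

lemma pos_of_mem_nearIntegerSet (hm : m ∈ nearIntegerSet γ A Q r) : 0 < m :=
  (Finset.mem_Ico.1 (Finset.mem_filter.1 hm).1).1

lemma lt_of_mem_nearIntegerSet (hm : m ∈ nearIntegerSet γ A Q r) : m < r :=
  (Finset.mem_Ico.1 (Finset.mem_filter.1 hm).1).2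

lemma card_nearIntegerSet_filter_div_eq_le (hv : IsCoprime (Q : ℤ) v)
    (hγ : r * |Q * γ - v| ≤ 1 / 2) (hδ : 0 ≤ δ)
    (hAδ : ∀ m ∈ nearIntegerSet γ A Q r, m / Q = k → A / m ≤ δ) :
    ({m ∈ nearIntegerSet γ A Q r | m / Q = k}.card : ℝ) ≤ 4 * Q * δ := by
  refine card_le_of_dnint_le_s11 (γ := γ) (n := fun m ↦ (r : ℤ) - m) hv hδ ?_ ?_ ?_ ?_
  · intro a ha b hb hab
    have hmod : a ≡ b [MOD Q] := by
      simpa [ZMod.natCast_eq_natCast_iff] using hab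
    rw [← Nat.div_add_mod a Q, ← Nat.div_add_mod b Q, hmod,
      (Finset.mem_filter.1 ha).2, (Finset.mem_filter.1 hb).2]
  · intro m hm hdvd
    have hm' := (Finset.mem_filter.1 (Finset.mem_filter.1 hm).1).2.1
    exact hm' (Nat.modEq_iff_dvd.2 hdvd)
  · intro m hm
    have hmr : (m : ℝ) ≤ r :=
      Nat.cast_le.2 (lt_of_mem_nearIntegerSet (Finset.mem_filter.1 hm).1).le
    refine le_trans ?_ hγ
    push_cast
    rw [abs_of_nonneg (sub_nonneg.2 hmr)]
    gcongr
    exact sub_le_self _ m.cast_nonneg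
  · intro m hm
    obtain ⟨hmS, hmk⟩ := Finset.mem_filter.1 hm
    push_cast
    exact (Finset.mem_filter.1 hmS).2.2.trans (hAδ m hmS hmk)

lemma card_nearIntegerSet_filter_div_eq_zero_le (hv : IsCoprime (Q : ℤ) v)
    (hγ : r * |Q * γ - v| ≤ 1 / 2) (hA : 0 ≤ A) :
    ({m ∈ nearIntegerSet γ A Q r | m / Q = 0}.card : ℝ) ≤ 4 * Q * A :=
  card_nearIntegerSet_filter_div_eq_le hv hγ hA fun _ hm _ ↦
    div_le_self hA (Nat.one_le_cast.2 (pos_of_mem_nearIntegerSet hm))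

lemma card_nearIntegerSet_filter_div_eq_le_mul_inv (hv : IsCoprime (Q : ℤ) v)
    (hγ : r * |Q * γ - v| ≤ 1 / 2) (hA : 0 ≤ A) (hQ : 0 < Q) (hk : 0 < k) :
    ({m ∈ nearIntegerSet γ A Q r | m / Q = k}.card : ℝ) ≤ 4 * A * (k : ℝ)⁻¹ := by
  have hblock := card_nearIntegerSet_filter_div_eq_le (A := A) (k := k) (δ := A / (k * Q))
    hv hγ (by positivity) (by
      rintro m - rfl
      gcongr
      exact_mod_cast Nat.div_mul_le_self m Q)
  convert hblock using 1
  field_simp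

lemma card_nearIntegerSet_filter_le_and_le (hv : IsCoprime (Q : ℤ) v)
    (hγ : r * |Q * γ - v| ≤ 1 / 2) (hA : 0 ≤ A) (hQ : 0 < Q) (hX : 0 < X) (hXr : X ≤ r) :
    ({m ∈ nearIntegerSet γ A Q r | Q ≤ m ∧ X ≤ m}.card : ℝ)
      ≤ 4 * A * (1 + Real.log (2 * r / X)) := by
  set T : Finset ℕ := {m ∈ nearIntegerSet γ A Q r | Q ≤ m ∧ X ≤ m}
  set a : ℕ := max 1 ⌊X / Q⌋₊
  have hmaps : Set.MapsTo (· / Q) (T : Set ℕ) (Finset.Icc a (r / Q)) := by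
    intro m hm
    obtain ⟨hmS, hQm, hXm⟩ := Finset.mem_filter.1 hm
    refine Finset.mem_Icc.2 ⟨max_le (Nat.div_pos hQm hQ) ?_,
      Nat.div_le_div_right (lt_of_mem_nearIntegerSet hmS).le⟩
    calc ⌊X / Q⌋₊ ≤ ⌊(m : ℝ) / Q⌋₊ := by gcongr
      _ = m / Q := Nat.floor_div_eq_div m Q
  calc (T.card : ℝ) = ∑ k ∈ Finset.Icc a (r / Q), ({m ∈ T | m / Q = k}.card : ℝ) := by
        exact_mod_cast Finset.card_eq_sum_card_fiberwise hmaps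
    _ ≤ ∑ k ∈ Finset.Icc a (r / Q), 4 * A * (k : ℝ)⁻¹ := by
      refine Finset.sum_le_sum fun k hk ↦ ?_
      have hk0 : 0 < k := (le_max_left 1 _).trans (Finset.mem_Icc.1 hk).1
      refine le_trans ?_ (card_nearIntegerSet_filter_div_eq_le_mul_inv hv hγ hA hQ hk0)
      gcongr
      exact Finset.filter_subset _ _
    _ ≤ 4 * A * (1 + Real.log (2 * r / X)) := by
      rw [← Finset.mul_sum]
      gcongr
      exact sum_Icc_max_floor_inv_le hQ hX hXr

lemma card_nearIntegerSet_le (hv : IsCoprime (Q : ℤ) v)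
    (hγ : r * |Q * γ - v| ≤ 1 / 2) (hA : 0 ≤ A) (hQ : 0 < Q) (hX : 0 < X) (hXr : X ≤ r) :
    ((nearIntegerSet γ A Q r).card : ℝ)
      ≤ min (Q : ℝ) (4 * Q * A) + X + 4 * A * (1 + Real.log (2 * r / X)) := by
  set N := nearIntegerSet γ A Q r
  have hsmall : ({m ∈ N | m / Q = 0}.card : ℝ) ≤ min (Q : ℝ) (4 * Q * A) := by
    refine le_min ?_ (card_nearIntegerSet_filter_div_eq_zero_le hv hγ hA)
    refine card_le_of_forall_pos_of_forall_le Q.cast_nonneg ?_ ?_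
    · exact fun m hm ↦ pos_of_mem_nearIntegerSet (Finset.mem_filter.1 hm).1
    · intro m hm
      have hlt : m < Q := (Nat.div_eq_zero_iff_lt hQ).1 (Finset.mem_filter.1 hm).2
      exact_mod_cast hlt.le
  have hmid : ({m ∈ N | ((m : ℕ) : ℝ) ≤ X}.card : ℝ) ≤ X :=
    card_le_of_forall_pos_of_forall_le hX.le
      (fun m hm ↦ pos_of_mem_nearIntegerSet (Finset.mem_filter.1 hm).1)
      (fun m hm ↦ (Finset.mem_filter.1 hm).2)
  have hlarge : ({m ∈ N | Q ≤ m ∧ X ≤ m}.card : ℝ) ≤ 4 * A * (1 + Real.log (2 * r / X)) :=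
    card_nearIntegerSet_filter_le_and_le hv hγ hA hQ hX hXr
  have hsub : N ⊆
      ({m ∈ N | m / Q = 0} ∪ {m ∈ N | ((m : ℕ) : ℝ) ≤ X}) ∪ {m ∈ N | Q ≤ m ∧ X ≤ m} := by
    intro m hm
    simp only [Finset.mem_union, Finset.mem_filter, hm, true_and, Nat.div_eq_zero_iff_lt hQ]
    rcases lt_or_ge m Q with hmQ | hQm
    · exact Or.inl (Or.inl hmQ)
    · exact (le_total (m : ℝ) X).imp Or.inr fun hXm ↦ ⟨hQm, hXm⟩
  have hcard := (Finset.card_le_card hsub).trans <| (Finset.card_union_le _ _).trans <|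
    Nat.add_le_add_right (Finset.card_union_le _ _) _
  calc (N.card : ℝ) ≤ ({m ∈ N | m / Q = 0}.card : ℝ) + ({m ∈ N | ((m : ℕ) : ℝ) ≤ X}.card : ℝ)
        + ({m ∈ N | Q ≤ m ∧ X ≤ m}.card : ℝ) := by exact_mod_cast hcard
    _ ≤ _ := by gcongr

end NearIntegerSet

/-- The `m ∈ [1, q / g)` such that `q' = g m` satisfies the closeness condition of the overlap sum
for `q`, with `gcd(q, q')` replaced by its divisor `g`. -/
noncomputable def overlapSet (γ : ℝ) (ψ : ℕ → ℝ) (q g : ℕ) : Finset ℕ :=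
  {m ∈ Finset.Ico 1 (q / g) | dnint (γ * (q / g - m)) ≤ Δfun ψ q (g * m) / g}

lemma card_filter_gcd_eq_le_card_overlapSet {γ : ℝ} {ψ : ℕ → ℝ} {q g : ℕ} (hg : 0 < g) :
    {q' ∈ Finset.Ico 1 q | Nat.gcd q' q = g ∧
      dnint (γ * ((q : ℝ) - q') / (Nat.gcd q q' : ℝ))
        ≤ Δfun ψ q q' / (Nat.gcd q q' : ℝ)}.card ≤ (overlapSet γ ψ q g).card := by
  refine (Finset.card_le_card (t := (overlapSet γ ψ q g).image (g * ·)) fun q' hq' ↦ ?_).trans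
    Finset.card_image_le
  obtain ⟨hmem, hgcd, hclose⟩ := Finset.mem_filter.1 hq'
  obtain ⟨hpos, hlt⟩ := Finset.mem_Ico.1 hmem
  rw [Nat.gcd_comm q, hgcd] at hclose
  obtain ⟨m, rfl⟩ : g ∣ q' := hgcd ▸ Nat.gcd_dvd_left q' q
  obtain ⟨r, rfl⟩ : g ∣ q := hgcd ▸ Nat.gcd_dvd_right (g * m) q
  refine Finset.mem_image_of_mem _ (Finset.mem_filter.2 ⟨Finset.mem_Ico.2 ⟨?_, ?_⟩, ?_⟩)
  · exact Nat.pos_of_mul_pos_left hpos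
  · rw [Nat.mul_div_cancel_left r hg]
    exact Nat.lt_of_mul_lt_mul_left hlt
  · convert hclose using 2
    push_cast
    field_simp

open Classical in
lemma sum_gcd_mul_ite_le_sum_card_overlapSet {γ : ℝ} {ψ : ℕ → ℝ} {q : ℕ} (hq : 0 < q)
    (hψq : 0 ≤ ψ q) :
    ∑ q' ∈ Finset.Ico 1 q, (ψ q / q) * (Nat.gcd q' q : ℝ) *
        (if dnint (γ * ((q : ℝ) - q') / (Nat.gcd q q' : ℝ))
            ≤ Δfun ψ q q' / (Nat.gcd q q' : ℝ) then 1 else 0)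
      ≤ ψ q * ∑ g ∈ q.divisors, (g : ℝ) / q * (overlapSet γ ψ q g).card := by
  have hgcd : ∀ q' ∈ Finset.Ico 1 q, Nat.gcd q' q ∈ q.divisors := fun q' _ ↦
    Nat.mem_divisors.2 ⟨Nat.gcd_dvd_right q' q, hq.ne'⟩
  rw [← Finset.sum_fiberwise_of_maps_to hgcd, Finset.mul_sum]
  refine Finset.sum_le_sum fun g hg ↦ ?_
  calc _ = ∑ q' ∈ Finset.Ico 1 q with Nat.gcd q' q = g, (ψ q / q) * g *
        (if dnint (γ * ((q : ℝ) - q') / (Nat.gcd q q' : ℝ))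
            ≤ Δfun ψ q q' / (Nat.gcd q q' : ℝ) then 1 else 0) :=
        Finset.sum_congr rfl fun q' hq' ↦ by rw [(Finset.mem_filter.1 hq').2]
    _ = (ψ q / q) * g * ({q' ∈ Finset.Ico 1 q | Nat.gcd q' q = g ∧
          dnint (γ * ((q : ℝ) - q') / (Nat.gcd q q' : ℝ))
            ≤ Δfun ψ q q' / (Nat.gcd q q' : ℝ)}.card : ℝ) := by
      rw [← Finset.mul_sum, Finset.sum_boole, Finset.filter_filter]
    _ ≤ (ψ q / q) * g * (overlapSet γ ψ q g).card := by
      gcongr ?_ * (Nat.cast ?_)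
      exact card_filter_gcd_eq_le_card_overlapSet (Nat.pos_of_mem_divisors hg)
    _ = ψ q * ((g : ℝ) / q * (overlapSet γ ψ q g).card) := by ring

lemma two_le_logb_logb {x : ℝ} (hx : 16 ≤ x) : 2 ≤ Real.logb 2 (Real.logb 2 x) := by
  have hlog : 4 ≤ Real.logb 2 x := by
    rw [Real.le_logb_iff_rpow_le (by norm_num) (by linarith)]
    norm_num [hx]
  rw [Real.le_logb_iff_rpow_le (by norm_num) (by linarith)]
  norm_num [hlog]

lemma half_logb_logb_le {x y : ℝ} (hx : 16 ≤ x) (hxy : √x ≤ y) :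
    Real.logb 2 (Real.logb 2 x) / 2 ≤ Real.logb 2 (Real.logb 2 y) := by
  have hlog : 0 < Real.logb 2 x := Real.logb_pos (by norm_num) (by linarith)
  have hsqrt : 1 < √x := Real.lt_sqrt_of_sq_lt (by linarith)
  have hlogsqrt : 0 < Real.logb 2 (√x) := Real.logb_pos (by norm_num) hsqrt
  calc Real.logb 2 (Real.logb 2 x) / 2 ≤ Real.logb 2 (Real.logb 2 x) - 1 := by
        linarith [two_le_logb_logb hx]
    _ = Real.logb 2 (Real.logb 2 (√x)) := by
      rw [Real.sqrt_eq_rpow, Real.logb_rpow_eq_mul_logb_of_pos (by linarith), mul_comm,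
        mul_one_div, Real.logb_div hlog.ne' (by norm_num),
        Real.logb_self_eq_one (by norm_num)]
    _ ≤ Real.logb 2 (Real.logb 2 y) := by gcongr <;> norm_num

lemma Δfun_le_s11 {C : ℝ} {ψ : ℕ → ℝ} {q q' : ℕ} (hC : 0 ≤ C)
    (hψ : ∀ n : ℕ, 3 ≤ n → ψ n ≤ C / ((n : ℝ) * (Real.logb 2 (Real.logb 2 n)) ^ 2))
    (hq : 16 ≤ q) (hsqrt : √(q : ℝ) ≤ q') (hle : q' ≤ q) :
    Δfun ψ q q' ≤ 8 * C * q / (q' * Real.logb 2 (Real.logb 2 q) ^ 2) := by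
  have hq16 : (16 : ℝ) ≤ q := by exact_mod_cast hq
  set L := Real.logb 2 (Real.logb 2 q)
  have hL2 : 2 ≤ L := two_le_logb_logb hq16
  have hsqrt4 : 4 ≤ √(q : ℝ) := Real.le_sqrt_of_sq_le (by linarith)
  have hψ' : ∀ n : ℕ, √(q : ℝ) ≤ n → ψ n ≤ 4 * C / (n * L ^ 2) := by
    intro n hn
    have hn3 : 3 ≤ n := by exact_mod_cast (by linarith : (3 : ℝ) ≤ n)
    calc ψ n ≤ C / (n * Real.logb 2 (Real.logb 2 n) ^ 2) := hψ n hn3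
      _ ≤ C / (n * (L / 2) ^ 2) := by gcongr; exact half_logb_logb_le hq16 hn
      _ = 4 * C / (n * L ^ 2) := by field_simp; norm_num
  have hq'0 : (0 : ℝ) < q' := by linarith
  have hle' : (q' : ℝ) ≤ q := by exact_mod_cast hle
  calc Δfun ψ q q' = q * ψ q' + q' * ψ q := rfl
    _ ≤ q * (4 * C / (q' * L ^ 2)) + q' * (4 * C / (q * L ^ 2)) := by
      gcongr
      exacts [hψ' q' hsqrt, hψ' q (hsqrt.trans hle')]
    _ ≤ q * (4 * C / (q' * L ^ 2)) + q * (4 * C / (q' * L ^ 2)) := by gcongr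
    _ = 8 * C * q / (q' * L ^ 2) := by ring

lemma sqrt_mul_div_le_div {Q g r : ℝ} (hQ : 0 < Q) (hg : 0 < g) (hgr : Q ^ 2 ≤ g * r) :
    √(g * r) / g ≤ r / Q := by
  rw [div_le_div_iff₀ hg hQ]
  calc √(g * r) * Q ≤ √(g * r) * √(g * r) := by gcongr; exact Real.le_sqrt_of_sq_le hgr
    _ = r * g := by rw [Real.mul_self_sqrt ((sq_nonneg Q).trans hgr), mul_comm]

lemma min_le_of_pow_four_le_mul {D Q g r X : ℝ} (hD : 0 ≤ D) (hQ : 0 < Q) (hg : 0 < g)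
    (hr : 0 ≤ r) (hgr : Q ^ 4 ≤ g * r) (hX : X ≤ r / g) :
    min Q (4 * Q * (D * X)) ≤ (1 + 4 * D) * r / Q := by
  rw [le_div_iff₀ hQ]
  -- One of `r` and `g` is at least `Q²`; each case uses one entry of the minimum.
  rcases le_total (Q ^ 2) r with hQr | hrQ
  · calc min Q (4 * Q * (D * X)) * Q ≤ Q * Q := by gcongr; exact min_le_left _ _
      _ ≤ 1 * r := by linarith
      _ ≤ (1 + 4 * D) * r := by gcongr; linarith
  · have hQg : Q ^ 2 ≤ g := by
      have : Q ^ 2 * Q ^ 2 ≤ g * Q ^ 2 := by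
        calc Q ^ 2 * Q ^ 2 = Q ^ 4 := by ring
          _ ≤ g * r := hgr
          _ ≤ g * Q ^ 2 := by gcongr
      exact le_of_mul_le_mul_right this (by positivity)
    calc min Q (4 * Q * (D * X)) * Q ≤ 4 * Q * (D * X) * Q := by
          gcongr; exact min_le_right _ _
      _ ≤ 4 * Q * (D * (r / g)) * Q := by gcongr
      _ = 4 * D * r * (Q ^ 2 / g) := by ring
      _ ≤ 4 * D * r * 1 := by gcongr; exact (div_le_one hg).2 hQg
      _ ≤ (1 + 4 * D) * r := by linarith

section Overlap

variable {γ D L : ℝ} {ψ : ℕ → ℝ} {Q q g : ℕ} {v : ℤ}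

lemma mem_nearIntegerSet_of_mem_overlapSet {m : ℕ}
    (hΔ : ∀ n : ℕ, √(q : ℝ) ≤ n → n ≤ q → Δfun ψ q n ≤ D * q / (n * L ^ 2))
    (hgq : g ∣ q) (hg : 0 < g) (hm : m ∈ overlapSet γ ψ q g) (hsqrt : √(q : ℝ) ≤ g * m)
    (hmod : ¬ m ≡ q / g [MOD Q]) :
    m ∈ nearIntegerSet γ (D * ((q / g : ℕ) / (g * L ^ 2))) Q (q / g) := by
  obtain ⟨hmem, hclose⟩ := Finset.mem_filter.1 hm
  obtain ⟨hpos, hlt⟩ := Finset.mem_Ico.1 hmem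
  have hle : g * m ≤ q := (Nat.mul_le_mul_left g hlt.le).trans (Nat.mul_div_le q g)
  refine Finset.mem_filter.2 ⟨hmem, hmod, ?_⟩
  rw [Nat.cast_div hgq (by positivity)]
  calc dnint (γ * (q / g - m)) ≤ Δfun ψ q (g * m) / g := hclose
    _ ≤ D * q / ((g * m : ℕ) * L ^ 2) / g := by
      gcongr
      exact hΔ (g * m) (by exact_mod_cast hsqrt) hle
    _ = D * (q / g / (g * L ^ 2)) / m := by push_cast; field_simp

lemma card_overlapSet_le
    (hΔ : ∀ n : ℕ, √(q : ℝ) ≤ n → n ≤ q → Δfun ψ q n ≤ D * q / (n * L ^ 2))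
    (hgq : g ∣ q) (hg : 0 < g) :
    ((overlapSet γ ψ q g).card : ℝ) ≤ √(q : ℝ) / g + (q / g : ℕ) / Q
      + (nearIntegerSet γ (D * ((q / g : ℕ) / (g * L ^ 2))) Q (q / g)).card := by
  set S := overlapSet γ ψ q g
  set N := nearIntegerSet γ (D * ((q / g : ℕ) / (g * L ^ 2))) Q (q / g)
  have hsmall : ({m ∈ S | (g * (m : ℕ) : ℝ) ≤ √(q : ℝ)}.card : ℝ) ≤ √(q : ℝ) / g := by
    refine card_le_of_forall_pos_of_forall_le (by positivity) ?_ ?_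
    · intro m hm
      exact (Finset.mem_Ico.1 (Finset.mem_filter.1 (Finset.mem_filter.1 hm).1).1).1
    · intro m hm
      rw [le_div_iff₀' (by positivity)]
      exact (Finset.mem_filter.1 hm).2
  have hclass := card_Ico_filter_modEq_self_le Q (q / g)
  have hsub : S ⊆ ({m ∈ S | (g * (m : ℕ) : ℝ) ≤ √(q : ℝ)} ∪
      {m ∈ Finset.Ico 1 (q / g) | m ≡ q / g [MOD Q]}) ∪ N := by
    intro m hm
    rw [Finset.mem_union, Finset.mem_union, Finset.mem_filter, Finset.mem_filter]
    by_cases hmod : m ≡ q / g [MOD Q]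
    · exact Or.inl (Or.inr ⟨(Finset.mem_filter.1 hm).1, hmod⟩)
    · exact (le_total (g * m : ℝ) (√(q : ℝ))).imp (fun hle ↦ Or.inl ⟨hm, hle⟩) fun hge ↦
        mem_nearIntegerSet_of_mem_overlapSet hΔ hgq hg hm hge hmod
  have hcard := (Finset.card_le_card hsub).trans <| (Finset.card_union_le _ _).trans <|
    Nat.add_le_add_right (Finset.card_union_le _ _) _
  calc (S.card : ℝ) ≤ ({m ∈ S | (g * (m : ℕ) : ℝ) ≤ √(q : ℝ)}.card : ℝ)
        + ({m ∈ Finset.Ico 1 (q / g) | m ≡ q / g [MOD Q]}.card : ℝ) + N.card := by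
        exact_mod_cast hcard
    _ ≤ _ := by gcongr

lemma div_mul_card_overlapSet_le
    (hv : IsCoprime (Q : ℤ) v) (hγ : q * |Q * γ - v| ≤ 1 / 2)
    (hΔ : ∀ n : ℕ, √(q : ℝ) ≤ n → n ≤ q → Δfun ψ q n ≤ D * q / (n * L ^ 2))
    (hD : 0 ≤ D) (hL : 1 ≤ L) (hQ : 0 < Q) (hQq : (Q : ℝ) ^ 4 ≤ q) (hgq : g ∣ q) (hg : 0 < g) :
    (g : ℝ) / q * (overlapSet γ ψ q g).card
      ≤ (3 + 4 * D) / Q + (1 + 4 * D) * ((1 + Real.log (2 * g * L ^ 2)) / (g * L ^ 2)) := by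
  obtain ⟨r, rfl⟩ := hgq
  have hQ1 : (1 : ℝ) ≤ Q := by exact_mod_cast hQ
  have hg1 : (1 : ℝ) ≤ g := by exact_mod_cast hg
  have hgr0 : (0 : ℝ) < (g * r : ℕ) := (by positivity : (0 : ℝ) < Q ^ 4).trans_le hQq
  have hr0 : 0 < r := Nat.pos_of_mul_pos_left (by exact_mod_cast hgr0)
  have hL1 : 1 ≤ L ^ 2 := one_le_pow₀ hL
  have hgL : 1 ≤ g * L ^ 2 := one_le_mul_of_one_le_of_one_le hg1 hL1
  have hlog : 0 ≤ Real.log (2 * g * L ^ 2) := Real.log_nonneg (by linarith)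
  set X : ℝ := r / (g * L ^ 2) with hX
  have hsqrt : √((g * r : ℕ) : ℝ) / g ≤ r / Q := by
    rw [Nat.cast_mul] at hQq ⊢
    exact sqrt_mul_div_le_div (by positivity) (by positivity)
      ((pow_le_pow_right₀ hQ1 (by norm_num)).trans hQq)
  have hmin : min (Q : ℝ) (4 * Q * (D * X)) ≤ (1 + 4 * D) * r / Q :=
    min_le_of_pow_four_le_mul hD (by positivity) (by positivity) r.cast_nonneg
      (by exact_mod_cast hQq) (div_le_div_of_nonneg_left (by positivity) (by positivity)
        (le_mul_of_one_le_right (by positivity) hL1))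
  have hγr : r * |Q * γ - v| ≤ 1 / 2 := by
    refine le_trans ?_ hγ
    gcongr
    exact Nat.le_mul_of_pos_left r hg
  have hnear := card_nearIntegerSet_le (A := D * X) hv hγr (by positivity) hQ
    (by positivity : 0 < X) (div_le_self (by positivity) hgL)
  rw [show 2 * r / X = 2 * g * L ^ 2 by rw [hX]; field_simp] at hnear
  have hcard := card_overlapSet_le (γ := γ) (Q := Q) hΔ (dvd_mul_right g r) hg
  rw [Nat.mul_div_cancel_left r hg] at hcard
  have hXlog : X ≤ X * (1 + Real.log (2 * g * L ^ 2)) :=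
    le_mul_of_one_le_right (by positivity) (by linarith)
  calc (g : ℝ) / (g * r : ℕ) * (overlapSet γ ψ (g * r) g).card
      ≤ g / (g * r : ℕ) * ((3 + 4 * D) * (r / Q)
          + (1 + 4 * D) * (X * (1 + Real.log (2 * g * L ^ 2)))) := by
        gcongr
        linarith [mul_div_assoc (1 + 4 * D) (r : ℝ) Q]
    _ = (3 + 4 * D) / Q + (1 + 4 * D) * ((1 + Real.log (2 * g * L ^ 2)) / (g * L ^ 2)) := by
      rw [hX]; push_cast; field_simp

lemma sum_card_overlapSet_le
    (hv : IsCoprime (Q : ℤ) v) (hγ : q * |Q * γ - v| ≤ 1 / 2)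
    (hΔ : ∀ n : ℕ, √(q : ℝ) ≤ n → n ≤ q → Δfun ψ q n ≤ D * q / (n * L ^ 2))
    (hD : 0 ≤ D) (hL : 2 ≤ L) (hQ : 0 < Q) (hQq : (Q : ℝ) ^ 4 ≤ q) (hd : q.divisors.card ≤ Q) :
    ∑ g ∈ q.divisors, (g : ℝ) / q * (overlapSet γ ψ q g).card
      ≤ 5 * (1 + 4 * D) * L⁻¹ ^ 2 * ∑ g ∈ q.divisors, Real.logb 2 g / g + (9 + 28 * D) := by
  have hd' : (q.divisors.card : ℝ) / Q ≤ 1 := (div_le_one (by positivity)).2 (by exact_mod_cast hd)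
  have hsq := sum_divisors_inv_sq_le_two q
  calc ∑ g ∈ q.divisors, (g : ℝ) / q * (overlapSet γ ψ q g).card
      ≤ ∑ g ∈ q.divisors, ((3 + 4 * D) / Q
          + (1 + 4 * D) * (5 * (L⁻¹ ^ 2 * (Real.logb 2 g / g)) + 3 * ((g : ℝ) ^ 2)⁻¹)) := by
        refine Finset.sum_le_sum fun g hg ↦ ?_
        have hg0 : 0 < g := Nat.pos_of_mem_divisors hg
        refine (div_mul_card_overlapSet_le hv hγ hΔ hD (by linarith) hQ hQq
          (Nat.dvd_of_mem_divisors hg) hg0).trans ?_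
        gcongr
        exact one_add_log_div_le (by exact_mod_cast hg0) hL
    _ = (3 + 4 * D) * (q.divisors.card / Q)
          + (1 + 4 * D) * (5 * (L⁻¹ ^ 2 * ∑ g ∈ q.divisors, Real.logb 2 g / g)
            + 3 * ∑ g ∈ q.divisors, ((g : ℝ) ^ 2)⁻¹) := by
      simp only [Finset.sum_add_distrib, ← Finset.mul_sum, Finset.sum_const, nsmul_eq_mul]
      ring
    _ ≤ (3 + 4 * D) * 1
          + (1 + 4 * D) * (5 * (L⁻¹ ^ 2 * ∑ g ∈ q.divisors, Real.logb 2 g / g) + 3 * 2) := by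
      gcongr
    _ = 5 * (1 + 4 * D) * L⁻¹ ^ 2 * ∑ g ∈ q.divisors, Real.logb 2 g / g + (9 + 28 * D) := by
      ring

end Overlap

open Classical in
theorem stmt11_general {C γ : ℝ} {ψ : ℕ → ℝ} {Q q : ℕ} (hC : 0 ≤ C) (hψ0 : ∀ n, 0 ≤ ψ n)
    (hψ : ∀ n : ℕ, 3 ≤ n → ψ n ≤ C / ((n : ℝ) * (Real.logb 2 (Real.logb 2 n)) ^ 2))
    (hQ : 2 ≤ Q) (hQq : (Q : ℝ) ^ 4 ≤ q) (hγ : q * dnint (Q * γ) ≤ 1 / 2)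
    (hgcd : Int.gcd (round (Q * γ)) Q = 1) (hd : ψ q ≠ 0 → q.divisors.card ≤ Q) :
    ∑ q' ∈ Finset.Ico 1 q, (ψ q / q) * (Nat.gcd q' q : ℝ) *
        (if dnint (γ * ((q : ℝ) - q') / (Nat.gcd q q' : ℝ))
            ≤ Δfun ψ q q' / (Nat.gcd q q' : ℝ) then 1 else 0)
      ≤ 5 * (1 + 32 * C) * ψ q * (Real.logb 2 (Real.logb 2 q))⁻¹ ^ 2 *
          (∑ r ∈ q.divisors, Real.logb 2 r / r)
        + (9 + 224 * C) * ψ q := by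
  by_cases hψq : ψ q = 0
  · simp [hψq]
  have hq : 16 ≤ q := (Nat.pow_le_pow_left hQ 4).trans (by exact_mod_cast hQq)
  have hsum := sum_card_overlapSet_le (Int.isCoprime_iff_gcd_eq_one.2 hgcd).symm hγ
    (fun n ↦ Δfun_le_s11 hC hψ hq) (by positivity) (two_le_logb_logb (by exact_mod_cast hq))
    (by lia) hQq (hd hψq)
  calc _ ≤ ψ q * ∑ g ∈ q.divisors, (g : ℝ) / q * (overlapSet γ ψ q g).card :=
        sum_gcd_mul_ite_le_sum_card_overlapSet (by lia) (hψ0 q)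
    _ ≤ ψ q * _ := mul_le_mul_of_nonneg_left hsum (hψ0 q)
    _ = _ := by ring

lemma mul_le_half_of_le_rpow_neg {Q q x σ : ℝ} (hQ : 2 ≤ Q) (hσ : 2 ≤ σ) (hx0 : 0 ≤ x)
    (hx : x ≤ Q ^ (-σ)) (hq : q ≤ Q ^ (σ / 2)) : q * x ≤ 1 / 2 := by
  calc q * x ≤ Q ^ (σ / 2) * Q ^ (-σ) := mul_le_mul hq hx hx0 (by positivity)
    _ = Q ^ (-(σ / 2)) := by
      rw [← Real.rpow_add (by linarith)]
      ring_nf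
    _ ≤ Q ^ (-1 : ℝ) := Real.rpow_le_rpow_of_exponent_le (by linarith) (by linarith)
    _ ≤ 1 / 2 := by
      rw [Real.rpow_neg_one, one_div]
      gcongr

lemma le_of_mul_logb_two_le {c Q q : ℝ} (hc : 0 ≤ c) (hq : 2 ≤ q)
    (h : c * Real.logb 2 q ≤ Q) : c ≤ Q := by
  refine (le_mul_of_one_le_right hc ?_).trans h
  rwa [Real.le_logb_iff_rpow_le (by norm_num) (by linarith), Real.rpow_one]

open Classical in
theorem stmt11 (C : ℝ) (hC : 0 < C) (ε₁ : ℝ) (hε₁ : 0 < ε₁) (hε₁' : ε₁ < 1/2) :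
    ∃ C' > (0:ℝ), ∃ C'' > (0:ℝ),
      ∀ γ : ℝ, Irrational γ →
      ∀ ψ : ℕ → ℝ, (∀ q, 0 ≤ ψ q) →
      (∀ q : ℕ, 3 ≤ q → ψ q ≤ C / ((q : ℝ) * (Real.logb 2 (Real.logb 2 q)) ^ 2)) →
      ψ 1 = 0 → ψ 2 = 0 →
      (∀ q : ℕ, 1 ≤ q →
        ((q.primeFactorsList.length : ℝ) > (Real.logb 2 q) ^ ((1:ℝ)/2 + ε₁) → ψ q = 0)) →
      ∀ Q : ℕ, 2 ^ 1000 ≤ Q → ∀ σ : ℕ, 14 ≤ σ →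
      dnint ((Q : ℝ) * γ) < (Q : ℝ) ^ (-(σ : ℝ)) →
      Int.gcd (round ((Q : ℝ) * γ)) (Q : ℤ) = 1 →
      (∀ q : ℕ, 1 ≤ q → (q : ℝ) ≤ (Q : ℝ) ^ ((σ : ℝ) / 2) → ψ q ≠ 0 →
        (q.divisors.card : ℝ) * Real.logb 2 q ≤ Q) →
      ∀ q : ℕ, (Q : ℝ) ^ (7 : ℕ) ≤ (q : ℝ) → (q : ℝ) ≤ (Q : ℝ) ^ ((σ : ℝ) / 2) →
      ∑ q' ∈ Finset.Ico 1 q, (ψ q / q) * (Nat.gcd q' q : ℝ) *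
        (if dnint (γ * ((q : ℝ) - q') / (Nat.gcd q q' : ℝ))
            ≤ Δfun ψ q q' / (Nat.gcd q q' : ℝ) then 1 else 0)
      ≤ C' * ψ q * (Real.logb 2 (Real.logb 2 q))⁻¹ ^ 2 *
          (∑ r ∈ q.divisors, Real.logb 2 r / r)
        + C'' * ψ q := by
  refine ⟨5 * (1 + 32 * C), by positivity, 9 + 224 * C, by positivity,
    fun γ _ ψ hψ0 hψ _ _ _ Q hQ σ hσ hγ hgcd hd q hQq hqσ ↦ ?_⟩
  have hQ2 : 2 ≤ Q := (Nat.le_self_pow (by norm_num) 2).trans hQ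
  have hQ2' : (2 : ℝ) ≤ Q := by exact_mod_cast hQ2
  have hQ4 : (Q : ℝ) ^ 4 ≤ q := (pow_le_pow_right₀ (by linarith) (by norm_num)).trans hQq
  have hq2 : (2 : ℝ) ≤ q := hQ2'.trans ((le_self_pow₀ (by linarith) (by norm_num)).trans hQq)
  exact stmt11_general hC.le hψ0 hψ hQ2 hQ4
    (mul_le_half_of_le_rpow_neg hQ2' (by exact_mod_cast (by lia : 2 ≤ σ)) (abs_nonneg _) hγ.le hqσ)
    hgcd fun hψq ↦ by
      exact_mod_cast le_of_mul_logb_two_le (Nat.cast_nonneg _) hq2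
        (hd q (by exact_mod_cast (by linarith : (1 : ℝ) ≤ q)) hqσ hψq)
end

section
/- Let ε > 0 and let ψ be an approximation function with ψ(q) = O(1/q). Then the series ∑ ψ(q), taken over those integers q ≥ 3 with Ω(q) ≥ (log q)^{1/2 + ε}, converges, where Ω(q) is the number of prime factors of q counted with multiplicity. -/
open Filter

/-!
Weight each `q` by `y ^ Ω(q)` with `y = 3/2`, the largest `y` for which
`(1 - t) ^ 2 ≤ 1 - y * t` at every `t = p ^ (-s)` with `s > 1`. Then the Euler factors of
`∑ y ^ Ω(n) / n ^ s` are at most the squares of those of `ζ(s)`, so the partial sums are at most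
`ζ(s) ^ 2 ≤ (s / (s - 1)) ^ 2`. Taking `s = 1 + 1 / log N` (Rankin's trick) gives
`∑_{n < N} y ^ Ω(n) / n = O((log N) ^ 2)`, and summation over dyadic blocks shows that
`∑ y ^ Ω(q) / (q (1 + log q) ^ b)` converges for `b > 3`. When `Ω(q) ≥ (log q) ^ a` with `a > 0`,
the factor `y ^ Ω(q)` eventually exceeds every power of `1 + log q`, so the terms of this series
at such large `q` are at least `1 / q`.
-/

open scoped ArithmeticFunction.Omega

section EulerProduct

variable {f g : ℕ →*₀ ℝ}

theorem sum_range_le_prod_primesBelow (hf0 : ∀ n, 0 ≤ f n) (hf1 : ∀ p, p.Prime → f p < 1)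
    (N : ℕ) : ∑ n ∈ Finset.range N, f n ≤ ∏ p ∈ N.primesBelow, (1 - f p)⁻¹ := by
  have hasSum_smooth : HasSum (N.smoothNumbers.indicator f) (∏ p ∈ N.primesBelow, (1 - f p)⁻¹) :=
    hasSum_subtype_iff_indicator.1
      (EulerProduct.summable_and_hasSum_smoothNumbers_prod_primesBelow_geometric
        (f := (f : ℕ →* ℝ))
        (fun {p} hp ↦ (Real.norm_of_nonneg (hf0 p)).trans_lt (hf1 p hp)) N).2
  have indicator_nonneg : ∀ n, 0 ≤ N.smoothNumbers.indicator f n :=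
    Set.indicator_nonneg fun n _ ↦ hf0 n
  refine (Finset.sum_le_sum fun n hn ↦ ?_).trans
    (sum_le_hasSum (Finset.range N) (fun n _ ↦ indicator_nonneg n) hasSum_smooth)
  rcases n.eq_zero_or_pos with rfl | hn0
  · simpa only [map_zero] using indicator_nonneg 0
  · rw [Set.indicator_of_mem (Nat.mem_smoothNumbers_of_lt hn0 (Finset.mem_range.1 hn))]

theorem prod_primesBelow_le_tsum (hg0 : ∀ n, 0 ≤ g n) (hg : Summable g) (N : ℕ) :
    ∏ p ∈ N.primesBelow, (1 - g p)⁻¹ ≤ ∑' n, g n :=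
  (EulerProduct.prod_primesBelow_geometric_eq_tsum_smoothNumbers (f := (g : ℕ →* ℝ)) hg N).trans_le
    (hg.tsum_subtype_le g _ hg0)

theorem sum_range_le_tsum_pow_of_eulerFactor_le (hf0 : ∀ n, 0 ≤ f n)
    (hf1 : ∀ p, p.Prime → f p < 1) (hg0 : ∀ n, 0 ≤ g n) (hg : Summable g) {m : ℕ}
    (hfg : ∀ p, p.Prime → (1 - f p)⁻¹ ≤ (1 - g p)⁻¹ ^ m) (N : ℕ) :
    ∑ n ∈ Finset.range N, f n ≤ (∑' n, g n) ^ m := by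
  have hg1 (p : ℕ) (hp : p.Prime) : 0 ≤ (1 - g p)⁻¹ :=
    inv_nonneg.2 <| sub_nonneg.2 <| (le_abs_self _).trans
      (Summable.norm_lt_one (f := (g : ℕ →* ℝ)) hg hp.one_lt).le
  calc ∑ n ∈ Finset.range N, f n
      ≤ ∏ p ∈ N.primesBelow, (1 - f p)⁻¹ := sum_range_le_prod_primesBelow hf0 hf1 N
    _ ≤ ∏ p ∈ N.primesBelow, (1 - g p)⁻¹ ^ m :=
      Finset.prod_le_prod
        (fun p hp ↦ inv_nonneg.2 (sub_nonneg.2 (hf1 p (Nat.prime_of_mem_primesBelow hp)).le))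
        fun p hp ↦ hfg p (Nat.prime_of_mem_primesBelow hp)
    _ = (∏ p ∈ N.primesBelow, (1 - g p)⁻¹) ^ m := Finset.prod_pow _ _ _
    _ ≤ (∑' n, g n) ^ m :=
      pow_le_pow_left₀ (Finset.prod_nonneg fun p hp ↦ hg1 p (Nat.prime_of_mem_primesBelow hp))
        (prod_primesBelow_le_tsum hg0 hg N) m

end EulerProduct

theorem tsum_one_div_nat_rpow_le {s : ℝ} (hs : 1 < s) :
    ∑' n : ℕ, 1 / (n : ℝ) ^ s ≤ s / (s - 1) := by
  have tsum_shift : ∑' n : ℕ, 1 / (n : ℝ) ^ s = ∑' n : ℕ, 1 / ((n : ℝ) + 1) ^ s := by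
    rw [(Real.summable_one_div_nat_rpow.2 hs).tsum_eq_zero_add]
    simp [Real.zero_rpow (by linarith : s ≠ 0)]
  have termTSum_nonneg : 0 ≤ s * ZetaAsymptotics.termTSum s :=
    mul_nonneg (by linarith) (tsum_nonneg fun n ↦ ZetaAsymptotics.term_nonneg _ s)
  have split : s / (s - 1) = 1 + 1 / (s - 1) := by
    field [(by linarith : s - 1 ≠ 0)]
  linarith [ZetaAsymptotics.zeta_limit_aux1 hs]

theorem summable_of_sum_Ico_two_pow_le {f u : ℕ → ℝ} (hf : ∀ n, 0 ≤ f n) (hu : Summable u)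
    (h : ∀ k, ∑ n ∈ Finset.Ico (2 ^ k) (2 ^ (k + 1)), f n ≤ u k) : Summable f := by
  have hu0 (k : ℕ) : 0 ≤ u k := (Finset.sum_nonneg fun n _ ↦ hf n).trans (h k)
  have sum_range_two_pow (K : ℕ) :
      ∑ n ∈ Finset.range (2 ^ K), f n ≤ f 0 + ∑ k ∈ Finset.range K, u k := by
    induction K with
    | zero => simp
    | succ K ih =>
      rw [← Finset.sum_range_add_sum_Ico f (Nat.pow_le_pow_right two_pos K.le_succ),
        Finset.sum_range_succ]
      linarith [h K]
  refine summable_of_sum_range_le (c := f 0 + ∑' k, u k) hf fun N ↦ ?_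
  calc ∑ n ∈ Finset.range N, f n
      ≤ ∑ n ∈ Finset.range (2 ^ N), f n :=
        Finset.sum_le_sum_of_subset_of_nonneg (Finset.range_mono Nat.lt_two_pow_self.le)
          fun n _ _ ↦ hf n
    _ ≤ f 0 + ∑ k ∈ Finset.range N, u k := sum_range_two_pow N
    _ ≤ f 0 + ∑' k, u k := by
        gcongr
        exact hu.sum_le_tsum _ fun k _ ↦ hu0 k

theorem inv_one_sub_mul_le_inv_one_sub_sq {y t : ℝ} (hy : y ≤ 3 / 2) (ht0 : 0 ≤ t)
    (ht : t ≤ 1 / 2) : (1 - y * t)⁻¹ ≤ (1 - t)⁻¹ ^ 2 := by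
  rw [inv_pow]
  exact inv_anti₀ (pow_pos (by linarith) 2) (by nlinarith)

/-- The completely multiplicative function `n ↦ y ^ Ω(n) / n ^ s`, whose Dirichlet series
weights `n` by its number of prime factors. The condition `s ≠ 0` makes it vanish at `0`. -/
noncomputable def powCardFactorsDivRpow (y s : ℝ) (hs : s ≠ 0) : ℕ →*₀ ℝ where
  toFun n := y ^ Ω n / (n : ℝ) ^ s
  map_zero' := by simp [Real.zero_rpow hs]
  map_one' := by simp
  map_mul' m n := by
    rcases eq_or_ne m 0 with rfl | hm
    · simp [Real.zero_rpow hs]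
    rcases eq_or_ne n 0 with rfl | hn
    · simp [Real.zero_rpow hs]
    rw [ArithmeticFunction.cardFactors_mul hm hn, pow_add, Nat.cast_mul,
      Real.mul_rpow m.cast_nonneg n.cast_nonneg, mul_div_mul_comm]

section PowCardFactors

variable {y : ℝ}

theorem powCardFactorsDivRpow_apply {s : ℝ} (hs : s ≠ 0) (n : ℕ) :
    powCardFactorsDivRpow y s hs n = y ^ Ω n / (n : ℝ) ^ s := rfl

theorem powCardFactorsDivRpow_apply_prime {s : ℝ} (hs : s ≠ 0) {p : ℕ} (hp : p.Prime) :
    powCardFactorsDivRpow y s hs p = y * (1 / (p : ℝ) ^ s) := by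
  rw [powCardFactorsDivRpow_apply, ArithmeticFunction.cardFactors_apply_prime hp, pow_one,
    mul_one_div]

theorem powCardFactorsDivRpow_one_apply {s : ℝ} (hs : s ≠ 0) (n : ℕ) :
    powCardFactorsDivRpow 1 s hs n = 1 / (n : ℝ) ^ s := by
  rw [powCardFactorsDivRpow_apply, one_pow]

theorem powCardFactorsDivRpow_nonneg (hy : 0 ≤ y) {s : ℝ} (hs : s ≠ 0) (n : ℕ) :
    0 ≤ powCardFactorsDivRpow y s hs n := by
  rw [powCardFactorsDivRpow_apply]
  positivity

theorem sum_range_pow_cardFactors_div_rpow_le (hy0 : 0 ≤ y) (hy : y ≤ 3 / 2) {s : ℝ} (hs : 1 < s)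
    (N : ℕ) : ∑ n ∈ Finset.range N, y ^ Ω n / (n : ℝ) ^ s ≤ (s / (s - 1)) ^ 2 := by
  have hs0 : s ≠ 0 := by linarith
  have one_div_prime_rpow_le {p : ℕ} (hp : p.Prime) : 1 / (p : ℝ) ^ s ≤ 1 / 2 := by
    have two_le : (2 : ℝ) ≤ p := mod_cast hp.two_le
    exact one_div_le_one_div_of_le two_pos
      (two_le.trans (Real.self_le_rpow_of_one_le (by linarith) hs.le))
  have summable_one : Summable (powCardFactorsDivRpow 1 s hs0) :=
    (Real.summable_one_div_nat_rpow.2 hs).congr fun n ↦ (powCardFactorsDivRpow_one_apply hs0 n).symm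
  have tsum_one_le : ∑' n, powCardFactorsDivRpow 1 s hs0 n ≤ s / (s - 1) := by
    simpa only [powCardFactorsDivRpow_one_apply] using tsum_one_div_nat_rpow_le hs
  have one_nonneg := powCardFactorsDivRpow_nonneg zero_le_one hs0
  calc ∑ n ∈ Finset.range N, powCardFactorsDivRpow y s hs0 n
      ≤ (∑' n, powCardFactorsDivRpow 1 s hs0 n) ^ 2 := by
        refine sum_range_le_tsum_pow_of_eulerFactor_le (powCardFactorsDivRpow_nonneg hy0 hs0)
          (fun p hp ↦ ?_) one_nonneg summable_one (fun p hp ↦ ?_) N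
        · rw [powCardFactorsDivRpow_apply_prime hs0 hp]
          nlinarith [one_div_prime_rpow_le hp]
        · rw [powCardFactorsDivRpow_apply_prime hs0 hp, powCardFactorsDivRpow_one_apply]
          exact inv_one_sub_mul_le_inv_one_sub_sq hy (by positivity) (one_div_prime_rpow_le hp)
    _ ≤ (s / (s - 1)) ^ 2 := pow_le_pow_left₀ (tsum_nonneg one_nonneg) tsum_one_le 2

theorem sum_range_pow_cardFactors_div_le (hy0 : 0 ≤ y) (hy : y ≤ 3 / 2) {N : ℕ} (hN : 1 < N) :
    ∑ n ∈ Finset.range N, y ^ Ω n / n ≤ 2 * (1 + Real.logb 2 N) ^ 2 := by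
  have hN1 : (1 : ℝ) < N := mod_cast hN
  have hL : 0 < Real.logb 2 N := Real.logb_pos one_lt_two hN1
  set σ : ℝ := 1 / Real.logb 2 N with hσ
  have hσ0 : 0 < σ := one_div_pos.2 hL
  have rpow_σ : (N : ℝ) ^ σ = 2 := by
    rw [← Real.rpow_logb two_pos (by norm_num) (zero_lt_one.trans hN1),
      ← Real.rpow_mul zero_le_two, mul_one_div_cancel hL.ne', Real.rpow_one]
  have rankin (n : ℕ) (hn : n ∈ Finset.range N) :
      y ^ Ω n / n ≤ 2 * (y ^ Ω n / (n : ℝ) ^ (1 + σ)) := by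
    rcases n.eq_zero_or_pos with rfl | hn0
    · simp [Real.zero_rpow (by linarith : 1 + σ ≠ 0)]
    have hn0' : (0 : ℝ) < n := mod_cast hn0
    have rpow_le : (n : ℝ) ^ σ ≤ 2 := rpow_σ ▸
      Real.rpow_le_rpow hn0'.le (mod_cast (Finset.mem_range.1 hn).le) hσ0.le
    rw [Real.rpow_add hn0', Real.rpow_one, ← mul_div_assoc, div_le_div_iff₀ hn0' (by positivity)]
    have := mul_le_mul_of_nonneg_left rpow_le (by positivity : 0 ≤ y ^ Ω n * n)
    linarith
  calc ∑ n ∈ Finset.range N, y ^ Ω n / n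
      ≤ 2 * ∑ n ∈ Finset.range N, y ^ Ω n / (n : ℝ) ^ (1 + σ) := by
        rw [Finset.mul_sum]
        exact Finset.sum_le_sum rankin
    _ ≤ 2 * ((1 + σ) / (1 + σ - 1)) ^ 2 := by
        gcongr
        exact sum_range_pow_cardFactors_div_rpow_le hy0 hy (by linarith) N
    _ = 2 * (1 + Real.logb 2 N) ^ 2 := by
        rw [add_sub_cancel_left, hσ]
        field

theorem sum_Ico_two_pow_pow_cardFactors_div_le (hy0 : 0 ≤ y) (hy : y ≤ 3 / 2) (k : ℕ) :
    ∑ q ∈ Finset.Ico (2 ^ k) (2 ^ (k + 1)), y ^ Ω q / q ≤ 8 * ((k : ℝ) + 1) ^ 2 := by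
  have logb_two_pow : Real.logb 2 ((2 ^ (k + 1) : ℕ) : ℝ) = k + 1 := by
    rw [Nat.cast_pow, Nat.cast_ofNat, Real.logb_pow, Real.logb_self_eq_one one_lt_two, mul_one,
      Nat.cast_succ]
  calc ∑ q ∈ Finset.Ico (2 ^ k) (2 ^ (k + 1)), y ^ Ω q / q
      ≤ ∑ q ∈ Finset.range (2 ^ (k + 1)), y ^ Ω q / q := by
        rw [Finset.range_eq_Ico]
        gcongr
        exact Nat.zero_le _
    _ ≤ 2 * (1 + ((k : ℝ) + 1)) ^ 2 := logb_two_pow ▸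
        sum_range_pow_cardFactors_div_le hy0 hy (Nat.one_lt_two_pow k.succ_ne_zero)
    _ ≤ 8 * ((k : ℝ) + 1) ^ 2 := by
        nlinarith [k.cast_nonneg (α := ℝ)]

theorem summable_pow_cardFactors_div_mul_one_add_logb_rpow (hy0 : 0 ≤ y) (hy : y ≤ 3 / 2) {b : ℝ}
    (hb : 3 < b) : Summable fun q : ℕ ↦ y ^ Ω q / (q * (1 + Real.logb 2 q) ^ b) := by
  have one_add_logb_nonneg (q : ℕ) : 0 ≤ 1 + Real.logb 2 q :=
    add_nonneg zero_le_one (div_nonneg (Real.log_natCast_nonneg q) (Real.log_nonneg one_le_two))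
  have summable_bound : Summable fun k : ℕ ↦ 8 * ((k + 1 : ℕ) : ℝ) ^ (2 - b) :=
    ((summable_nat_add_iff 1).2 (Real.summable_nat_rpow.2 (by linarith))).mul_left 8
  refine summable_of_sum_Ico_two_pow_le
    (fun q ↦ by have := one_add_logb_nonneg q; positivity) summable_bound fun k ↦ ?_
  have le_one_add_logb (q : ℕ) (hq : 2 ^ k ≤ q) : (k : ℝ) + 1 ≤ 1 + Real.logb 2 q := by
    have two_pow_le : (2 : ℝ) ^ k ≤ q := mod_cast hq
    rw [add_comm, add_le_add_iff_left,
      Real.le_logb_iff_rpow_le one_lt_two (lt_of_lt_of_le (by positivity) two_pow_le),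
      Real.rpow_natCast]
    exact two_pow_le
  calc ∑ q ∈ Finset.Ico (2 ^ k) (2 ^ (k + 1)), y ^ Ω q / (q * (1 + Real.logb 2 q) ^ b)
      ≤ ∑ q ∈ Finset.Ico (2 ^ k) (2 ^ (k + 1)), y ^ Ω q / q / ((k : ℝ) + 1) ^ b := by
        refine Finset.sum_le_sum fun q hq ↦ ?_
        rw [← div_div]
        gcongr _ / ?_ ^ b
        exact le_one_add_logb q (Finset.mem_Ico.1 hq).1
    _ ≤ 8 * ((k : ℝ) + 1) ^ 2 / ((k : ℝ) + 1) ^ b := by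
        rw [← Finset.sum_div]
        gcongr
        exact sum_Ico_two_pow_pow_cardFactors_div_le hy0 hy k
    _ = 8 * ((k + 1 : ℕ) : ℝ) ^ (2 - b) := by
        rw [Nat.cast_succ, Real.rpow_sub (by positivity), Real.rpow_two, mul_div_assoc]

end PowCardFactors

theorem isLittleO_log_one_add_rpow_atTop {a : ℝ} (ha : 0 < a) :
    (fun x : ℝ ↦ Real.log (1 + x)) =o[atTop] fun x ↦ x ^ a := by
  have one_add_isBigO : (fun x : ℝ ↦ 1 + x) =O[atTop] id :=
    (Asymptotics.isLittleO_const_id_atTop 1).isBigO.add (Asymptotics.isBigO_refl id atTop)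
  exact ((isLittleO_log_rpow_atTop ha).comp_tendsto
    (tendsto_atTop_add_const_left atTop 1 tendsto_id)).trans_isBigO
      (one_add_isBigO.rpow ha.le (eventually_ge_atTop 0))

theorem eventually_one_add_rpow_le_rpow_rpow {y a : ℝ} (hy : 1 < y) (ha : 0 < a) (b : ℝ) :
    ∀ᶠ x : ℝ in atTop, (1 + x) ^ b ≤ y ^ (x ^ a) := by
  have log_isLittleO : (fun x : ℝ ↦ b * Real.log (1 + x)) =o[atTop] fun x ↦ Real.log y * x ^ a :=
    ((isLittleO_log_one_add_rpow_atTop ha).const_mul_left b).const_mul_right (Real.log_pos hy).ne'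
  filter_upwards [log_isLittleO.bound one_pos, eventually_ge_atTop 0] with x hx hx0
  have log_y_mul_nonneg : 0 ≤ Real.log y * x ^ a :=
    mul_nonneg (Real.log_pos hy).le (Real.rpow_nonneg hx0 a)
  rw [one_mul, Real.norm_of_nonneg log_y_mul_nonneg] at hx
  rw [Real.rpow_def_of_pos (by linarith), Real.rpow_def_of_pos (by linarith), mul_comm _ b]
  exact Real.exp_le_exp.2 ((Real.le_norm_self _).trans hx)

open Classical in
theorem stmt16_general {E : Type*} [NormedAddCommGroup E] [CompleteSpace E] {a : ℝ} (ha : 0 < a)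
    {ψ : ℕ → E} (hψ : ψ =O[atTop] fun q : ℕ ↦ (q : ℝ)⁻¹) :
    Summable fun q : ℕ ↦ if 3 ≤ q ∧ Real.logb 2 q ^ a ≤ Ω q then ψ q else 0 := by
  have summable_weight := summable_pow_cardFactors_div_mul_one_add_logb_rpow (y := 3 / 2) (b := 4)
    (by norm_num) le_rfl (by norm_num)
  have tendsto_logb : Tendsto (fun q : ℕ ↦ Real.logb 2 q) atTop atTop :=
    (Real.tendsto_logb_atTop one_lt_two).comp tendsto_natCast_atTop_atTop
  have logb_rpow_le := tendsto_logb.eventually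
    (eventually_one_add_rpow_le_rpow_rpow (y := 3 / 2) (by norm_num) ha 4)
  obtain ⟨C, hC0, hC⟩ := hψ.exists_nonneg
  refine summable_of_isBigO_nat summable_weight (Asymptotics.IsBigO.of_bound C ?_)
  filter_upwards [hC.bound, logb_rpow_le, tendsto_logb.eventually_ge_atTop 0]
    with q hψq hq hL
  split_ifs with h
  · have logb_rpow_le_pow : (1 + Real.logb 2 q) ^ (4 : ℝ) ≤ (3 / 2 : ℝ) ^ Ω q :=
      hq.trans ((Real.rpow_le_rpow_of_exponent_le (by norm_num) h.2).trans_eq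
        (Real.rpow_natCast _ _))
    refine hψq.trans (mul_le_mul_of_nonneg_left ?_ hC0)
    rw [Real.norm_of_nonneg (by positivity), Real.norm_of_nonneg (by positivity),
      ← div_div, div_right_comm, inv_eq_one_div]
    gcongr
    rwa [one_le_div (by positivity)]
  · rw [norm_zero]
    positivity

open Classical in
theorem stmt16 (ε : ℝ) (hε : 0 < ε) (ψ : ℕ → ℝ) (hψ0 : ∀ q, 0 ≤ ψ q)
    (hO : ∃ C > (0:ℝ), ∀ q : ℕ, 1 ≤ q → ψ q ≤ C / q) :
    Summable (fun q : ℕ =>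
      if 3 ≤ q ∧ (Real.logb 2 q) ^ ((1:ℝ)/2 + ε) ≤ (q.primeFactorsList.length : ℝ)
      then ψ q else 0) := by
  obtain ⟨C, -, hC⟩ := hO
  exact stmt16_general (by positivity) <| .of_bound C <| eventually_atTop.2 ⟨1, fun q hq ↦ by
    simpa [abs_of_nonneg (hψ0 q), div_eq_mul_inv] using hC q hq⟩
end

section
/- There is an absolute constant c > 0 with the following property. Let α be an irrational number, let Q ≥ 2 be an integer, and let σ ≥ 1 be a real number such that ‖hα‖ ≥ h^{−σ} for every integer 2 ≤ h ≤ Q and ‖α‖ ≥ 2^{−σ}. Then for every interval I ⊆ [0,1]: |#{1 ≤ n ≤ Q : the fractional part of nα lies in I} − Q·|I|| ≤ c·σ·Q^{σ/(1+σ)}. -/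
open Filter

/-!
By Dirichlet, choose a reduced fraction `p / q` with `q ≤ X := Q ^ (σ / (1 + σ))` and
`|q α - p| ≤ 1 / X`. The Diophantine hypothesis at `h = q` forces `q ≫ Q / X`, so `{1, …, Q}` is
covered by `O(X)` blocks of `q` consecutive integers. Along such a block `n p` runs through all
residues modulo `q`, and `q {n α}` differs from an integer congruent to `n p` by `n (q α - p)`,
which varies by at most `1`. So in each block `{n α}` visits a closed interval of length `L` at
most `q L + 3` times, and the upper bound `Q L + O(X)` follows by summing over blocks. The lower
bound is the upper bound applied to the two complementary intervals.
-/

open Classical in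
/-- The counting function `A(S; s)` of discrepancy theory: the number of indices in `s` at which the
sequence `x` visits `S`. The index set is an arbitrary finset so that blocks of indices can be
counted separately. -/
noncomputable def visitCount {ι : Type*} (x : ι → ℝ) (s : Finset ι) (S : Set ℝ) : ℕ :=
  (s.filter fun i => x i ∈ S).card

section visitCount

variable {ι : Type*} {x : ι → ℝ} {s t : Finset ι} {S T : Set ℝ}

lemma visitCount_mono (hst : s ⊆ t) (hST : S ⊆ T) : visitCount x s S ≤ visitCount x t T := by
  classical
  exact Finset.card_le_card fun i hi => by
    rw [Finset.mem_filter] at hi ⊢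
    exact ⟨hst hi.1, hST hi.2⟩

lemma visitCount_union_index_le [DecidableEq ι] :
    visitCount x (s ∪ t) S ≤ visitCount x s S + visitCount x t S := by
  classical
  rw [visitCount, Finset.filter_union]
  exact Finset.card_union_le _ _

lemma visitCount_union_le : visitCount x s (S ∪ T) ≤ visitCount x s S + visitCount x s T := by
  classical
  simp only [visitCount, Set.mem_union, Finset.filter_or]
  exact Finset.card_union_le _ _

lemma visitCount_eq_card (h : ∀ i ∈ s, x i ∈ S) : visitCount x s S = s.card := by
  classical
  rw [visitCount, Finset.filter_true_of_mem h]

lemma visitCount_le_card_of_injOn {κ : Type*} {u : Finset κ} (f : ι → κ)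
    (hf : ∀ i ∈ s, x i ∈ S → f i ∈ u) (hinj : Set.InjOn f s) : visitCount x s S ≤ u.card := by
  classical
  refine Finset.card_le_card_of_injOn f (fun i hi => ?_)
    (hinj.mono (Finset.coe_subset.mpr (Finset.filter_subset _ _)))
  obtain ⟨his, hiS⟩ := Finset.mem_filter.mp hi
  exact hf i his hiS

lemma card_le_visitCount_add_Icc_add_Icc {a b : ℝ} {I : Set ℝ} (hx : ∀ i ∈ s, x i ∈ Set.Icc 0 1)
    (hI : Set.Ioo a b ⊆ I) :
    s.card ≤ visitCount x s I + (visitCount x s (Set.Icc 0 a) + visitCount x s (Set.Icc b 1)) := by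
  have hcover : ∀ i ∈ s, x i ∈ I ∪ (Set.Icc 0 a ∪ Set.Icc b 1) := fun i hi => by
    rcases le_or_gt (x i) a with hxa | hax
    · exact .inr (.inl ⟨(hx i hi).1, hxa⟩)
    rcases le_or_gt b (x i) with hbx | hxb
    · exact .inr (.inr ⟨hbx, (hx i hi).2⟩)
    · exact .inl (hI ⟨hax, hxb⟩)
  calc s.card = visitCount x s (I ∪ (Set.Icc 0 a ∪ Set.Icc b 1)) := (visitCount_eq_card hcover).symm
    _ ≤ visitCount x s I + visitCount x s (Set.Icc 0 a ∪ Set.Icc b 1) := visitCount_union_le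
    _ ≤ _ := Nat.add_le_add_left visitCount_union_le _

lemma abs_visitCount_sub_le_of_forall_Icc {E : ℝ} (hx : ∀ i ∈ s, x i ∈ Set.Icc 0 1)
    (hE : ∀ a b, 0 ≤ a → a ≤ b → b ≤ 1 → visitCount x s (Set.Icc a b) ≤ s.card * (b - a) + E)
    {a b : ℝ} (ha : 0 ≤ a) (hab : a ≤ b) (hb : b ≤ 1) {I : Set ℝ} (hI : Set.Ioo a b ⊆ I)
    (hI' : I ⊆ Set.Icc a b) :
    |visitCount x s I - s.card * (b - a)| ≤ 2 * E := by
  have hmid := hE a b ha hab hb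
  have hleft := hE 0 a le_rfl ha (hab.trans hb)
  have hright := hE b 1 (ha.trans hab) hb le_rfl
  have hE0 : 0 ≤ E := by
    have hpoint := hE 0 0 le_rfl le_rfl zero_le_one
    rw [sub_zero, mul_zero, zero_add] at hpoint
    exact (Nat.cast_nonneg _).trans hpoint
  have hupper : (visitCount x s I : ℝ) ≤ visitCount x s (Set.Icc a b) :=
    mod_cast visitCount_mono subset_rfl hI'
  have hlower : (s.card : ℝ) ≤
      visitCount x s I + (visitCount x s (Set.Icc 0 a) + visitCount x s (Set.Icc b 1)) :=
    mod_cast card_le_visitCount_add_Icc_add_Icc hx hI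
  rw [abs_le]
  constructor <;> linarith

end visitCount

section Blocks

variable {x : ℕ → ℝ} {q : ℕ} {S : Set ℝ} {B : ℝ}

lemma visitCount_Ioc_mul_le_of_forall_block
    (hB : ∀ m, visitCount x (Finset.Ioc m (m + q)) S ≤ B) (M : ℕ) :
    visitCount x (Finset.Ioc 0 (M * q)) S ≤ M * B := by
  induction M with
  | zero => simp [visitCount]
  | succ M ih =>
    have hsplit : Finset.Ioc 0 ((M + 1) * q) =
        Finset.Ioc 0 (M * q) ∪ Finset.Ioc (M * q) (M * q + q) := by
      rw [Finset.Ioc_union_Ioc_eq_Ioc (Nat.zero_le _) (Nat.le_add_right _ _), Nat.succ_mul]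
    calc (visitCount x (Finset.Ioc 0 ((M + 1) * q)) S : ℝ)
        ≤ visitCount x (Finset.Ioc 0 (M * q)) S +
            visitCount x (Finset.Ioc (M * q) (M * q + q)) S := by
          rw [hsplit]
          exact_mod_cast visitCount_union_index_le
      _ ≤ M * B + B := add_le_add ih (hB _)
      _ = (M + 1 : ℕ) * B := by push_cast; ring

lemma visitCount_Icc_one_le_of_forall_block (hq : 0 < q)
    (hB : ∀ m, visitCount x (Finset.Ioc m (m + q)) S ≤ B) (N : ℕ) :
    visitCount x (Finset.Icc 1 N) S ≤ (N / q + 1) * B := by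
  have hB0 : 0 ≤ B := (Nat.cast_nonneg _).trans (hB 0)
  have hcover : Finset.Icc 1 N ⊆ Finset.Ioc 0 ((N / q + 1) * q) := fun n hn => by
    rw [Finset.mem_Icc] at hn
    exact Finset.mem_Ioc.mpr ⟨hn.1, hn.2.trans (Nat.lt_mul_of_div_lt (Nat.lt_succ_self _) hq).le⟩
  calc (visitCount x (Finset.Icc 1 N) S : ℝ)
      ≤ visitCount x (Finset.Ioc 0 ((N / q + 1) * q)) S :=
        mod_cast visitCount_mono hcover subset_rfl
    _ ≤ (N / q + 1 : ℕ) * B := visitCount_Ioc_mul_le_of_forall_block hB _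
    _ ≤ (N / q + 1) * B := by
        push_cast
        gcongr
        exact Nat.cast_div_le

end Blocks

lemma card_Icc_ceil_floor_le {u v : ℝ} (huv : u ≤ v + 1) :
    ((Finset.Icc ⌈u⌉ ⌊v⌋).card : ℝ) ≤ v - u + 1 := by
  have hcard : ((Finset.Icc ⌈u⌉ ⌊v⌋).card : ℝ) = max ((⌊v⌋ : ℝ) + 1 - ⌈u⌉) 0 := by
    rw [Int.card_Icc]
    exact_mod_cast Int.toNat_eq_max _
  rw [hcard]
  exact max_le (by linarith [Int.floor_le v, Int.le_ceil u]) (by linarith)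

lemma injOn_mul_sub_mul_Ioc {p : ℤ} {q : ℕ} (hpq : IsCoprime p q) (f : ℕ → ℤ) (m : ℕ) :
    Set.InjOn (fun n : ℕ => n * p - q * f n) (Finset.Ioc m (m + q)) := by
  intro n hn n' hn' heq
  rw [Finset.mem_coe, Finset.mem_Ioc] at hn hn'
  have hdvd_mul : (q : ℤ) ∣ (n - n') * p := ⟨f n - f n', by linear_combination heq⟩
  have hdvd : (q : ℤ) ∣ n - n' := hpq.symm.dvd_of_dvd_mul_right hdvd_mul
  have hzero : (n : ℤ) - n' = 0 := Int.eq_zero_of_abs_lt_dvd hdvd (by rw [abs_lt]; omega)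
  omega

section RationalApproximation

variable {α : ℝ} {r : ℚ} {a b : ℝ}

lemma mul_num_sub_den_mul_floor_mem_Icc (hr : |r.den * α - r.num| ≤ (r.den : ℝ)⁻¹) {m n : ℕ}
    (hn : n ∈ Finset.Ioc m (m + r.den)) (hfract : Int.fract (n * α) ∈ Set.Icc a b) :
    (n * r.num - r.den * ⌊n * α⌋ : ℤ) ∈
      Finset.Icc ⌈r.den * a - m * (r.den * α - r.num) - 1⌉
        ⌊r.den * b - m * (r.den * α - r.num) + 1⌋ := by
  have hq : (0 : ℝ) < r.den := mod_cast r.den_pos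
  set δ : ℝ := r.den * α - r.num with hδ
  have hkey : ((n * r.num - r.den * ⌊n * α⌋ : ℤ) : ℝ) = r.den * Int.fract (n * α) - n * δ := by
    rw [Int.fract, hδ]
    push_cast
    ring
  have hdrift : |(n - m) * δ| ≤ 1 := by
    obtain ⟨hmn, hnm⟩ := Finset.mem_Ioc.mp hn
    have hmn' : (0 : ℝ) ≤ n - m := sub_nonneg.mpr (mod_cast hmn.le)
    have hnm' : (n : ℝ) - m ≤ r.den := sub_le_iff_le_add'.mpr (mod_cast hnm)
    calc |(n - m) * δ| = (n - m) * |δ| := by rw [abs_mul, abs_of_nonneg hmn']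
      _ ≤ r.den * (r.den : ℝ)⁻¹ := by gcongr
      _ = 1 := mul_inv_cancel₀ hq.ne'
  have hlower := mul_le_mul_of_nonneg_left hfract.1 hq.le
  have hupper := mul_le_mul_of_nonneg_left hfract.2 hq.le
  rw [Finset.mem_Icc, Int.ceil_le, Int.le_floor, hkey]
  constructor <;> linarith [abs_le.mp hdrift]

lemma visitCount_fract_block_le (hr : |r.den * α - r.num| ≤ (r.den : ℝ)⁻¹) (hab : a ≤ b) (m : ℕ) :
    visitCount (fun n : ℕ => Int.fract (n * α)) (Finset.Ioc m (m + r.den)) (Set.Icc a b) ≤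
      r.den * (b - a) + 3 := by
  set u : ℝ := r.den * a - m * (r.den * α - r.num) - 1 with hu
  set v : ℝ := r.den * b - m * (r.den * α - r.num) + 1 with hv
  have hcop : IsCoprime r.num r.den := Int.isCoprime_iff_gcd_eq_one.mpr r.reduced
  have hlength : v - u = r.den * (b - a) + 2 := by rw [hu, hv]; ring
  have hqL : 0 ≤ r.den * (b - a) := mul_nonneg (Nat.cast_nonneg _) (sub_nonneg.mpr hab)
  have hcard : visitCount (fun n : ℕ => Int.fract (n * α)) (Finset.Ioc m (m + r.den))
      (Set.Icc a b) ≤ (Finset.Icc ⌈u⌉ ⌊v⌋).card :=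
    visitCount_le_card_of_injOn (fun n : ℕ => n * r.num - r.den * ⌊n * α⌋)
      (fun _ hn hfract => mul_num_sub_den_mul_floor_mem_Icc hr hn hfract)
      (injOn_mul_sub_mul_Ioc hcop _ m)
  calc _ ≤ ((Finset.Icc ⌈u⌉ ⌊v⌋).card : ℝ) := mod_cast hcard
    _ ≤ v - u + 1 := card_Icc_ceil_floor_le (by linarith)
    _ = r.den * (b - a) + 3 := by rw [hlength]; ring

lemma abs_visitCount_fract_sub_le (hr : |r.den * α - r.num| ≤ (r.den : ℝ)⁻¹) (N : ℕ)
    (ha : 0 ≤ a) (hab : a ≤ b) (hb : b ≤ 1) {I : Set ℝ} (hI : Set.Ioo a b ⊆ I)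
    (hI' : I ⊆ Set.Icc a b) :
    |visitCount (fun n : ℕ => Int.fract (n * α)) (Finset.Icc 1 N) I - N * (b - a)| ≤
      2 * (r.den + 3 * (N / r.den) + 3) := by
  have hIcc : ∀ a b, 0 ≤ a → a ≤ b → b ≤ 1 →
      (visitCount (fun n : ℕ => Int.fract (n * α)) (Finset.Icc 1 N) (Set.Icc a b) : ℝ) ≤
        (Finset.Icc 1 N).card * (b - a) + (r.den + 3 * (N / r.den) + 3) := by
    intro a b ha hab hb
    calc _ ≤ ((N : ℝ) / r.den + 1) * (r.den * (b - a) + 3) :=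
          visitCount_Icc_one_le_of_forall_block r.den_pos (visitCount_fract_block_le hr hab) N
      _ = N * (b - a) + (r.den * (b - a) + 3 * (N / r.den) + 3) := by field_simp; ring
      _ ≤ N * (b - a) + (r.den * 1 + 3 * (N / r.den) + 3) := by gcongr; linarith
      _ = _ := by rw [Nat.card_Icc, Nat.add_sub_cancel, mul_one]
  have hfract : ∀ n ∈ Finset.Icc 1 N, Int.fract (n * α) ∈ Set.Icc 0 1 :=
    fun n _ => ⟨Int.fract_nonneg _, (Int.fract_lt_one _).le⟩
  have hmain := abs_visitCount_sub_le_of_forall_Icc hfract hIcc ha hab hb hI hI'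
  rwa [Nat.card_Icc, Nat.add_sub_cancel] at hmain

end RationalApproximation

lemma exists_rat_den_le_abs_den_mul_sub_num_le (α : ℝ) {X : ℝ} (hX : 1 ≤ X) :
    ∃ r : ℚ, (r.den : ℝ) ≤ X ∧ |r.den * α - r.num| ≤ X⁻¹ := by
  obtain ⟨r, happrox, hden⟩ := Real.exists_rat_abs_sub_le_and_den_le α (Nat.floor_pos.mpr hX)
  have hX0 : 0 < X := zero_lt_one.trans_le hX
  have hq : (0 : ℝ) < r.den := mod_cast r.den_pos
  refine ⟨r, (Nat.cast_le.mpr hden).trans (Nat.floor_le hX0.le), ?_⟩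
  have hscale : r.den * α - r.num = r.den * (α - r) := by
    rw [Rat.cast_def r]
    field_simp
  calc |r.den * α - r.num| = r.den * |α - r| := by rw [hscale, abs_mul, abs_of_pos hq]
    _ ≤ r.den * (1 / ((⌊X⌋₊ + 1) * r.den)) := by gcongr
    _ = (⌊X⌋₊ + 1 : ℝ)⁻¹ := by field_simp
    _ ≤ X⁻¹ := inv_anti₀ hX0 (Nat.lt_floor_add_one X).le

lemma le_rpow_mul_of_rpow_le_rpow {Q σ t : ℝ} (hQ : 0 < Q) (hσ : 0 < σ) (ht : 0 ≤ t)
    (h : Q ^ (σ / (1 + σ)) ≤ t ^ σ) : Q ≤ Q ^ (σ / (1 + σ)) * t := by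
  have hroot : Q ^ (1 / (1 + σ)) ≤ t := by
    rw [← Real.rpow_le_rpow_iff (by positivity) ht hσ, ← Real.rpow_mul hQ.le]
    rwa [one_div_mul_eq_div]
  calc Q = Q ^ (σ / (1 + σ) + 1 / (1 + σ)) := by
        rw [← add_div, add_comm σ, div_self (by positivity), Real.rpow_one]
    _ = Q ^ (σ / (1 + σ)) * Q ^ (1 / (1 + σ)) := Real.rpow_add hQ _ _
    _ ≤ Q ^ (σ / (1 + σ)) * t := by gcongr

lemma exists_rat_approx_den_le_div_den_le {α σ κ : ℝ} {Q : ℕ} (hQ : 0 < Q) (hσ : 0 < σ) (hκ : 0 < κ)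
    (hα : ∀ h : ℕ, 1 ≤ h → h ≤ Q → (κ * h) ^ (-σ) ≤ dnint (h * α)) :
    ∃ r : ℚ, |r.den * α - r.num| ≤ (r.den : ℝ)⁻¹ ∧ (r.den : ℝ) ≤ (Q : ℝ) ^ (σ / (1 + σ)) ∧
      (Q : ℝ) / r.den ≤ κ * (Q : ℝ) ^ (σ / (1 + σ)) := by
  have hQ1 : (1 : ℝ) ≤ Q := mod_cast hQ
  set X : ℝ := (Q : ℝ) ^ (σ / (1 + σ))
  have hX : 1 ≤ X := Real.one_le_rpow hQ1 (by positivity)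
  have hXQ : X ≤ Q :=
    Real.rpow_le_self_of_one_le hQ1 (div_le_one_of_le₀ (by linarith) (by linarith))
  obtain ⟨r, hden, happrox⟩ := exists_rat_den_le_abs_den_mul_sub_num_le α hX
  have hq : (0 : ℝ) < r.den := mod_cast r.den_pos
  have hdioph : (κ * r.den) ^ (-σ) ≤ X⁻¹ :=
    calc (κ * r.den) ^ (-σ) ≤ dnint (r.den * α) := hα r.den r.den_pos (mod_cast hden.trans hXQ)
      _ ≤ |r.den * α - r.num| := round_le _ _
      _ ≤ X⁻¹ := happrox
  have hpow : X ≤ (κ * r.den) ^ σ := by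
    rw [Real.rpow_neg (by positivity)] at hdioph
    exact (inv_le_inv₀ (by positivity) (by positivity)).mp hdioph
  refine ⟨r, happrox.trans (inv_anti₀ hq hden), hden, ?_⟩
  rw [div_le_iff₀ hq]
  calc (Q : ℝ) ≤ X * (κ * r.den) :=
        le_rpow_mul_of_rpow_le_rpow (by positivity) hσ (by positivity) hpow
    _ = κ * X * r.den := by ring

open Classical in
theorem stmt17_general {α σ κ : ℝ} {Q : ℕ} (hQ : 0 < Q) (hσ : 0 < σ) (hκ : 0 < κ)
    (hα : ∀ h : ℕ, 1 ≤ h → h ≤ Q → (κ * h) ^ (-σ) ≤ dnint (h * α))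
    {a b : ℝ} (ha : 0 ≤ a) (hab : a ≤ b) (hb : b ≤ 1)
    {I : Set ℝ} (hI : Set.Ioo a b ⊆ I) (hI' : I ⊆ Set.Icc a b) :
    |(((Finset.Icc 1 Q).filter (fun n : ℕ => Int.fract ((n : ℝ) * α) ∈ I)).card : ℝ)
        - Q * (b - a)|
      ≤ (6 * κ + 8) * (Q : ℝ) ^ (σ / (1 + σ)) := by
  obtain ⟨r, happrox, hden, hquot⟩ := exists_rat_approx_den_le_div_den_le hQ hσ hκ hα
  have hX : 1 ≤ (Q : ℝ) ^ (σ / (1 + σ)) := Real.one_le_rpow (mod_cast hQ) (by positivity)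
  calc _ ≤ 2 * ((r.den : ℝ) + 3 * (Q / r.den) + 3) :=
        abs_visitCount_fract_sub_le happrox Q ha hab hb hI hI'
    _ ≤ (6 * κ + 8) * (Q : ℝ) ^ (σ / (1 + σ)) := by linarith

lemma two_mul_rpow_neg_le_dnint {α σ : ℝ} {Q : ℕ} (hσ : 0 ≤ σ)
    (hα : ∀ h : ℕ, 2 ≤ h → h ≤ Q → (h : ℝ) ^ (-σ) ≤ dnint (h * α)) (hα₁ : 2 ^ (-σ) ≤ dnint α)
    (h : ℕ) (h₁ : 1 ≤ h) (hQ : h ≤ Q) : (2 * h : ℝ) ^ (-σ) ≤ dnint (h * α) := by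
  rcases h₁.eq_or_lt with rfl | h₂
  · simpa only [Nat.cast_one, mul_one, one_mul] using hα₁
  · have hpos : (0 : ℝ) < h := mod_cast h₁
    exact (Real.rpow_le_rpow_of_nonpos hpos (by linarith) (neg_nonpos.mpr hσ)).trans (hα h h₂ hQ)

open Classical in
theorem stmt17 : ∃ c > (0:ℝ), ∀ α : ℝ, Irrational α →
    ∀ Q : ℕ, 2 ≤ Q → ∀ σ : ℝ, 1 ≤ σ →
    (∀ h : ℕ, 2 ≤ h → h ≤ Q → (h : ℝ) ^ (-σ) ≤ dnint (h * α)) →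
    (2:ℝ) ^ (-σ) ≤ dnint α →
    ∀ a b : ℝ, 0 ≤ a → a ≤ b → b ≤ 1 →
    ∀ I : Set ℝ, Set.Ioo a b ⊆ I → I ⊆ Set.Icc a b →
    |(((Finset.Icc 1 Q).filter (fun n : ℕ => Int.fract ((n : ℝ) * α) ∈ I)).card : ℝ)
        - Q * (b - a)|
      ≤ c * σ * (Q : ℝ) ^ (σ / (1 + σ)) := by
  refine ⟨20, by norm_num, fun α _ Q hQ σ hσ hα hα₁ a b ha hab hb I hI hI' => ?_⟩
  have hσ₀ : 0 < σ := zero_lt_one.trans_le hσ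
  calc _ ≤ (6 * 2 + 8) * (Q : ℝ) ^ (σ / (1 + σ)) :=
        stmt17_general (zero_lt_two.trans_le hQ) hσ₀ two_pos
          (two_mul_rpow_neg_le_dnint hσ₀.le hα hα₁) ha hab hb hI hI'
    _ ≤ 20 * σ * (Q : ℝ) ^ (σ / (1 + σ)) := by gcongr; linarith
end
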